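/- There exist constants p > 0 and C > 0 such that for every integer n ≥ 1, Fav(G_n) ≤ C · n^{-p}. -/

import Mathlib

open MeasureTheory

/-- Projection of a planar set onto the direction `θ`. -/
noncomputable def projDir (θ : ℝ) (E : Set ℂ) : Set ℝ :=
  (fun z : ℂ => (Complex.exp (-(θ : ℂ) * Complex.I) * z).re) '' E

/-- Favard length: the average over directions of the length of the projection. -/
noncomputable def fav (E : Set ℂ) : ℝ :=
  (1 / Real.pi) * ∫ θ in (0:ℝ)..Real.pi, (volume (projDir θ E)).toReal

/-- The center `z_α` of the disc indexed by `α ∈ {-1,0,1}^n`. -/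
noncomputable def gasketCenter (n : ℕ) (α : Fin n → ℤ) : ℂ :=
  ∑ k : Fin n, (3 : ℂ) ^ (-(k.1 + 1 : ℤ)) *
    Complex.exp (Complex.I * (Real.pi : ℂ) * ((1/2 : ℂ) + (2/3 : ℂ) * (α k : ℂ)))

/-- The disc model `G_n` of the `n`-th Sierpinski gasket approximation. -/
noncomputable def gasket (n : ℕ) : Set ℂ :=
  ⋃ α ∈ {α : Fin n → ℤ | ∀ k, α k = -1 ∨ α k = 0 ∨ α k = 1},
    Metric.ball (gasketCenter n α) ((3 : ℝ) ^ (-(n : ℤ)))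

/-!
In direction `θ` the gasket projects into the union of the intervals of radius `3⁻ⁿ` about the
base `3` expansions of length `n` in three digits depending on `θ`. Call a word heavy if `K`
intervals of its generation meet in a point of its own interval.

If heavy words are frequent, the cover shrinks: where `K` intervals are stacked they waste length,
by self-similarity the waste repeats inside the remaining intervals, and the length falls to
`O(1 / K)`.

If heavy words are scarce, decomposing along the minimal heavy words bounds the square integral of
the number of intervals covering a point, that is, by a large sieve inequality, the mass on
`[0, 3ⁿ]` of a Riesz product. But if the first `m` factors of this product stay above some `c > 0`
on `[1, 3ᵐ]`, each window `[3ⁿ, 3ⁿ⁺ᵐ]` carries a share of the mass proportional to `c`, and more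
than `4 / c` disjoint windows contradict the bound. So heavy words are frequent for `K ≈ 3ᵐ`.

The factor at `y / 3` controls the phases at `y` because `1 + z + w = 0` with `|z| = |w| = 1` forces
`z³ = w³ = 1`; hence the lower bound `c` fails only where both phases are near `1` at some frequency
in `[1, 3ᵐ]`, which forces `θ` to be near one of finitely many resonant directions. These
exceptional directions have measure `O(3⁻ᵐ)`.
-/

namespace FavardLength

noncomputable section

open Metric Set
open scoped Finset

/-! ### Exponential sums and overlapping intervals -/

section ExponentialSums

variable {ι : Type*} (s : Finset ι) (x : ι → ℝ)

/-- The exponential sum with frequencies `x i`, `i ∈ s`: the Fourier transform of the counting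
measure on the points `x i`. -/
def expSum (ξ : ℝ) : ℂ := ∑ i ∈ s, Complex.exp ((x i * ξ : ℝ) * Complex.I)

@[fun_prop]
lemma continuous_expSum : Continuous (expSum s x) := by
  unfold expSum
  fun_prop

lemma norm_expSum_sq (ξ : ℝ) :
    ‖expSum s x ξ‖ ^ 2 = ∑ i ∈ s, ∑ j ∈ s, Real.cos ((x i - x j) * ξ) := by
  rw [expSum, Complex.sq_norm, Complex.normSq_apply, Complex.re_sum, Complex.im_sum]
  simp only [Complex.exp_ofReal_mul_I_re, Complex.exp_ofReal_mul_I_im, Finset.sum_mul_sum,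
    ← Finset.sum_add_distrib, sub_mul, Real.cos_sub]

/-- The Fejér kernel, as the cosine transform of the triangle weight `1 - ξ / T` on `[0, T]`. -/
def fejer (T b : ℝ) : ℝ := ∫ ξ in (0 : ℝ)..T, (1 - ξ / T) * Real.cos (b * ξ)

lemma fejer_zero (T : ℝ) : fejer T 0 = T / 2 := by
  rcases eq_or_ne T 0 with rfl | hT
  · simp [fejer]
  have hderiv : ∀ ξ ∈ uIcc 0 T, HasDerivAt (fun ξ => ξ - ξ ^ 2 / (2 * T))
      ((1 - ξ / T) * Real.cos (0 * ξ)) ξ := fun ξ _ =>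
    ((hasDerivAt_id ξ).sub (((hasDerivAt_id ξ).pow 2).div_const (2 * T))).congr_deriv
      (by simp; field_simp)
  rw [fejer, intervalIntegral.integral_eq_sub_of_hasDerivAt hderiv
    (Continuous.intervalIntegrable (by fun_prop) _ _)]
  field_simp
  ring

lemma fejer_of_ne_zero (T : ℝ) {b : ℝ} (hb : b ≠ 0) :
    fejer T b = (1 - Real.cos (b * T)) / (b ^ 2 * T) := by
  rcases eq_or_ne T 0 with rfl | hT
  · simp [fejer]
  have hderiv : ∀ ξ ∈ uIcc 0 T, HasDerivAt
      (fun ξ => (1 - ξ / T) * (Real.sin (b * ξ) / b) - Real.cos (b * ξ) / (b ^ 2 * T))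
      ((1 - ξ / T) * Real.cos (b * ξ)) ξ := by
    intro ξ _
    have hmul : HasDerivAt (fun ξ => b * ξ) b ξ := by
      simpa using (hasDerivAt_id ξ).const_mul b
    have htri : HasDerivAt (fun ξ : ℝ => 1 - ξ / T) (-(1 / T)) ξ := by
      simpa using ((hasDerivAt_id ξ).div_const T).const_sub 1
    refine ((htri.mul (hmul.sin.div_const b)).sub (hmul.cos.div_const (b ^ 2 * T))).congr_deriv ?_
    field_simp
    ring
  rw [fejer, intervalIntegral.integral_eq_sub_of_hasDerivAt hderiv
    (Continuous.intervalIntegrable (by fun_prop) _ _)]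
  simp only [mul_zero, Real.sin_zero, Real.cos_zero]
  field_simp
  ring

lemma fejer_nonneg {T : ℝ} (hT : 0 ≤ T) (b : ℝ) : 0 ≤ fejer T b := by
  rcases eq_or_ne b 0 with rfl | hb
  · rw [fejer_zero]
    positivity
  · rw [fejer_of_ne_zero T hb]
    exact div_nonneg (sub_nonneg.2 (Real.cos_le_one _)) (by positivity)

lemma fejer_le_half {T : ℝ} (hT : 0 < T) (b : ℝ) : fejer T b ≤ T / 2 := by
  rw [← fejer_zero T]
  refine intervalIntegral.integral_mono_on hT.le (Continuous.intervalIntegrable (by fun_prop) _ _)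
    (Continuous.intervalIntegrable (by fun_prop) _ _) fun ξ hξ => ?_
  refine mul_le_mul_of_nonneg_left ?_ (sub_nonneg.2 ((div_le_one hT).2 hξ.2))
  simpa using Real.cos_le_one _

lemma fejer_le_div_sq {T b : ℝ} (hT : 0 ≤ T) (hb : b ≠ 0) : fejer T b ≤ 2 / (b ^ 2 * T) := by
  rw [fejer_of_ne_zero T hb]
  gcongr
  linarith [Real.neg_one_le_cos (b * T)]

lemma integral_triangle_mul_norm_expSum_sq (T : ℝ) :
    ∫ ξ in (0 : ℝ)..T, (1 - ξ / T) * ‖expSum s x ξ‖ ^ 2 =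
      ∑ i ∈ s, ∑ j ∈ s, fejer T (x i - x j) := by
  simp only [norm_expSum_sq, Finset.mul_sum]
  have hint (i j : ι) : IntervalIntegrable (fun ξ => (1 - ξ / T) * Real.cos ((x i - x j) * ξ))
      volume 0 T := Continuous.intervalIntegrable (by fun_prop) _ _
  rw [intervalIntegral.integral_finsetSum fun i _ => by
    simpa only [Finset.sum_fn] using IntervalIntegrable.sum s fun j _ => hint i j]
  refine Finset.sum_congr rfl fun i _ => ?_
  rw [intervalIntegral.integral_finsetSum fun j _ => hint i j]
  rfl

theorem half_mul_card_le_integral_norm_expSum_sq {T : ℝ} (hT : 0 ≤ T) :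
    T / 2 * #s ≤ ∫ ξ in (0 : ℝ)..T, ‖expSum s x ξ‖ ^ 2 := by
  calc T / 2 * #s = ∑ i ∈ s, fejer T (x i - x i) := by simp [fejer_zero, mul_comm]
    _ ≤ ∑ i ∈ s, ∑ j ∈ s, fejer T (x i - x j) := Finset.sum_le_sum fun i hi =>
        Finset.single_le_sum (f := fun j => fejer T (x i - x j)) (fun _ _ => fejer_nonneg hT _) hi
    _ = ∫ ξ in (0 : ℝ)..T, (1 - ξ / T) * ‖expSum s x ξ‖ ^ 2 :=
        (integral_triangle_mul_norm_expSum_sq s x T).symm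
    _ ≤ ∫ ξ in (0 : ℝ)..T, ‖expSum s x ξ‖ ^ 2 := by
        refine intervalIntegral.integral_mono_on hT
          (Continuous.intervalIntegrable (by fun_prop) _ _)
          (Continuous.intervalIntegrable (by fun_prop) _ _) fun ξ hξ => ?_
        have : 0 ≤ ξ / T := div_nonneg hξ.1 hT
        exact mul_le_of_le_one_left (by positivity) (by linarith)

lemma integral_norm_expSum_sq_le_sum_fejer {l : ℝ} (hl : 0 < l) :
    ∫ ξ in (0 : ℝ)..l, ‖expSum s x ξ‖ ^ 2 ≤
      2 * ∑ i ∈ s, ∑ j ∈ s, fejer (2 * l) (x i - x j) := by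
  rw [← integral_triangle_mul_norm_expSum_sq, ← intervalIntegral.integral_const_mul]
  calc ∫ ξ in (0 : ℝ)..l, ‖expSum s x ξ‖ ^ 2
      ≤ ∫ ξ in (0 : ℝ)..l, 2 * ((1 - ξ / (2 * l)) * ‖expSum s x ξ‖ ^ 2) := by
        refine intervalIntegral.integral_mono_on hl.le
          (Continuous.intervalIntegrable (by fun_prop) _ _)
          (Continuous.intervalIntegrable (by fun_prop) _ _) fun ξ hξ => ?_
        have : ξ / (2 * l) ≤ 1 / 2 := by
          rw [div_le_div_iff₀ (by positivity) two_pos]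
          linarith [hξ.2]
        nlinarith [sq_nonneg ‖expSum s x ξ‖]
    _ ≤ ∫ ξ in (0 : ℝ)..2 * l, 2 * ((1 - ξ / (2 * l)) * ‖expSum s x ξ‖ ^ 2) := by
        refine intervalIntegral.integral_mono_interval le_rfl hl.le (by linarith) ?_
          (Continuous.intervalIntegrable (by fun_prop) _ _)
        filter_upwards [ae_restrict_mem measurableSet_Ioc] with ξ hξ
        have : 0 ≤ 1 - ξ / (2 * l) := sub_nonneg.2 ((div_le_one (by positivity)).2 hξ.2)
        simp only [Pi.zero_apply]
        positivity

/-- A summable majorant of the Fejér kernel in terms of the distance `j` between two bins. -/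
def binKernel (j : ℤ) : ℝ := 5 / (1 + (j : ℝ) ^ 2)

lemma binKernel_nonneg (j : ℤ) : 0 ≤ binKernel j := by unfold binKernel; positivity

lemma summable_binKernel : Summable binKernel := by
  have h : Summable fun j : ℤ => 5 * (1 / (j : ℝ) ^ 2) :=
    (Real.summable_one_div_int_pow.2 one_lt_two).mul_left 5
  refine Summable.of_norm_bounded_eventually h ?_
  filter_upwards [(finite_singleton (0 : ℤ)).compl_mem_cofinite] with j (hj : j ≠ 0)
  rw [Real.norm_of_nonneg (binKernel_nonneg j), binKernel, mul_one_div]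
  gcongr
  linarith

/-- The total mass of `binKernel`, the constant in the large sieve inequality
`integral_norm_expSum_sq_le`. -/
def sieveConst : ℝ := ∑' j, binKernel j

lemma five_le_sieveConst : 5 ≤ sieveConst := by
  calc (5 : ℝ) = binKernel 0 := by simp [binKernel]
    _ ≤ sieveConst := summable_binKernel.le_tsum 0 fun j _ => binKernel_nonneg j

lemma sieveConst_pos : 0 < sieveConst := by linarith [five_le_sieveConst]

lemma abs_floor_sub_floor_sub_le (u v : ℝ) : |((⌊u⌋ - ⌊v⌋ : ℤ) : ℝ)| - 1 ≤ |u - v| := by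
  have h : |((⌊u⌋ - ⌊v⌋ : ℤ) : ℝ) - (u - v)| ≤ 1 := by
    push_cast
    rw [abs_le]
    constructor <;>
      linarith [Int.floor_le u, Int.lt_floor_add_one u, Int.floor_le v, Int.lt_floor_add_one v]
  linarith [abs_sub_abs_le_abs_sub ((⌊u⌋ - ⌊v⌋ : ℤ) : ℝ) (u - v)]

lemma fejer_le_binKernel {l : ℝ} (hl : 0 < l) (u v : ℝ) :
    fejer (2 * l) (u - v) ≤ l * binKernel (⌊l * u⌋ - ⌊l * v⌋) := by
  have hT : 0 < 2 * l := by positivity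
  have hdist : |((⌊l * u⌋ - ⌊l * v⌋ : ℤ) : ℝ)| - 1 ≤ |l * (u - v)| := by
    simpa only [mul_sub] using abs_floor_sub_floor_sub_le (l * u) (l * v)
  generalize ⌊l * u⌋ - ⌊l * v⌋ = j at hdist ⊢
  rw [binKernel]
  rcases le_or_gt |j| 1 with hj | hj
  · have hj' : (j : ℝ) ^ 2 ≤ 1 := by exact_mod_cast (sq_le_one_iff_abs_le_one j).2 hj
    have : 1 ≤ 5 / (1 + (j : ℝ) ^ 2) := by
      rw [le_div_iff₀ (by positivity)]
      linarith
    nlinarith [fejer_le_half hT (u - v)]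
  · have hj' : (2 : ℝ) ≤ |(j : ℝ)| := by exact_mod_cast hj
    have hne : u - v ≠ 0 := fun h => by
      simp only [h, mul_zero, abs_zero] at hdist
      linarith
    have hsq : 1 + (j : ℝ) ^ 2 ≤ 5 * (l * (u - v)) ^ 2 := by
      rw [← sq_abs (j : ℝ), ← sq_abs (l * (u - v))]
      nlinarith
    refine (fejer_le_div_sq hT.le hne).trans ?_
    rw [← mul_div_assoc, div_le_div_iff₀ (by positivity) (by positivity)]
    linarith

end ExponentialSums

section Schur

variable {G : Type*} {κ : G → ℝ}

lemma sum_le_tsum_comp_of_injective (hκ : Summable κ) (hκ₀ : ∀ g, 0 ≤ κ g) {ι : Type*} {f : ι → G}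
    (hf : Function.Injective f) (t : Finset ι) : ∑ i ∈ t, κ (f i) ≤ ∑' g, κ g := by
  simpa only [Finset.sum_map, Function.Embedding.coeFn_mk] using
    hκ.sum_le_tsum (t.map ⟨f, hf⟩) fun g _ => hκ₀ g

variable [AddGroup G]

theorem sum_sum_mul_mul_sub_le (hκ : Summable κ) (hκ₀ : ∀ g, 0 ≤ κ g) (t : Finset G) (c : G → ℝ) :
    ∑ g ∈ t, ∑ h ∈ t, c g * c h * κ (g - h) ≤ (∑' g, κ g) * ∑ g ∈ t, c g ^ 2 := by
  have hrow : ∑ g ∈ t, ∑ h ∈ t, c g ^ 2 * κ (g - h) ≤ (∑' g, κ g) * ∑ g ∈ t, c g ^ 2 := by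
    simp only [← Finset.mul_sum, mul_comm (∑' g, κ g), Finset.sum_mul]
    gcongr with g
    exact sum_le_tsum_comp_of_injective hκ hκ₀ (sub_right_injective (b := g)) t
  have hcol : ∑ g ∈ t, ∑ h ∈ t, c h ^ 2 * κ (g - h) ≤ (∑' g, κ g) * ∑ g ∈ t, c g ^ 2 := by
    rw [Finset.sum_comm]
    simp only [← Finset.mul_sum, mul_comm (∑' g, κ g), Finset.sum_mul]
    gcongr with h
    exact sum_le_tsum_comp_of_injective hκ hκ₀ (sub_left_injective (b := h)) t
  have hyoung : ∑ g ∈ t, ∑ h ∈ t, c g * c h * κ (g - h) ≤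
      ∑ g ∈ t, ∑ h ∈ t, (c g ^ 2 * κ (g - h) + c h ^ 2 * κ (g - h)) / 2 := by
    gcongr with g _ h
    rw [← add_mul, mul_div_right_comm]
    exact mul_le_mul_of_nonneg_right (by linarith [two_mul_le_add_sq (c g) (c h)]) (hκ₀ _)
  simp only [← Finset.sum_div, Finset.sum_add_distrib] at hyoung
  linarith

lemma sum_sum_comp_sub_le [DecidableEq G] (hκ : Summable κ) (hκ₀ : ∀ g, 0 ≤ κ g) {ι : Type*}
    (s : Finset ι) (β : ι → G) :
    ∑ i ∈ s, ∑ j ∈ s, κ (β i - β j) ≤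
      (∑' g, κ g) * ∑ g ∈ s.image β, (#{i ∈ s | β i = g} : ℝ) ^ 2 := by
  refine le_trans (le_of_eq ?_)
    (sum_sum_mul_mul_sub_le hκ hκ₀ (s.image β) fun g => #{i ∈ s | β i = g})
  rw [Finset.sum_comp (fun g => ∑ j ∈ s, κ (g - β j))]
  refine Finset.sum_congr rfl fun g _ => ?_
  rw [Finset.sum_comp (fun h => κ (g - h)), nsmul_eq_mul, Finset.mul_sum]
  simp only [nsmul_eq_mul, mul_assoc]

end Schur

section BallCount

variable {ι : Type*} (s : Finset ι) (x : ι → ℝ)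

/-- The number of intervals of radius `r` about the points `x i`, `i ∈ s`, that cover `t`. -/
def ballCount (r t : ℝ) : ℕ := #{i ∈ s | dist t (x i) ≤ r}

lemma ballCount_eq_sum_indicator (r t : ℝ) :
    (ballCount s x r t : ℝ) = ∑ i ∈ s, (closedBall (x i) r).indicator (fun _ => 1) t := by
  classical
  simp only [ballCount, Finset.card_filter, indicator_apply, mem_closedBall]
  push_cast
  rfl

lemma memLp_ballCount (p : ENNReal) (r : ℝ) :
    MemLp (fun t => (ballCount s x r t : ℝ)) p := by
  simp_rw [ballCount_eq_sum_indicator]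
  exact memLp_finsetSum s fun i _ =>
    memLp_indicator_const p measurableSet_closedBall 1 (Or.inr measure_closedBall_lt_top.ne)

lemma integrable_ballCount (r : ℝ) : Integrable fun t => (ballCount s x r t : ℝ) :=
  memLp_one_iff_integrable.1 (memLp_ballCount s x 1 r)

lemma integrable_ballCount_sq (r : ℝ) : Integrable fun t => (ballCount s x r t : ℝ) ^ 2 :=
  (memLp_ballCount s x 2 r).integrable_sq

lemma integral_ballCount {r : ℝ} (hr : 0 ≤ r) : ∫ t, (ballCount s x r t : ℝ) = #s * (2 * r) := by
  simp_rw [ballCount_eq_sum_indicator]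
  rw [integral_finsetSum _ fun i _ => (integrable_indicator_iff measurableSet_closedBall).2
    (integrableOn_const measure_closedBall_lt_top.ne)]
  simp [integral_indicator_const _ measurableSet_closedBall, Real.volume_real_closedBall hr]

lemma card_floor_eq_le_ballCount {l : ℝ} (hl : 0 < l) (t : ℝ) :
    #{i ∈ s | ⌊l * x i⌋ = ⌊l * t⌋} ≤ ballCount s x l⁻¹ t := by
  refine Finset.card_le_card (Finset.monotone_filter_right s fun i _ hi => ?_)
  have h := Int.abs_sub_lt_one_of_floor_eq_floor hi
  rw [← mul_sub, abs_mul, abs_of_pos hl, ← lt_inv_mul_iff₀ hl, mul_one] at h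
  rw [dist_comm]
  exact h.le

lemma sum_card_floor_eq_sq_le {l : ℝ} (hl : 0 < l) :
    ∑ b ∈ s.image (fun i => ⌊l * x i⌋), (#{i ∈ s | ⌊l * x i⌋ = b} : ℝ) ^ 2 ≤
      l * ∫ t, (ballCount s x l⁻¹ t : ℝ) ^ 2 := by
  set bins := s.image fun i => ⌊l * x i⌋
  let n : ℤ → ℝ := fun b => #{i ∈ s | ⌊l * x i⌋ = b}
  let bin : ℤ → Set ℝ := fun b => Ico (b / l) ((b + 1) / l)
  have mem_bin (b : ℤ) (t : ℝ) : t ∈ bin b ↔ ⌊l * t⌋ = b := by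
    rw [Int.floor_eq_iff, mem_Ico, div_le_iff₀ hl, lt_div_iff₀ hl, mul_comm t]
  have hpointwise (t : ℝ) : ∑ b ∈ bins, (bin b).indicator (fun _ => n b ^ 2) t ≤
      (ballCount s x l⁻¹ t : ℝ) ^ 2 := by
    simp only [indicator_apply, mem_bin, Finset.sum_ite_eq]
    split_ifs
    · gcongr
      exact Nat.cast_le.2 (card_floor_eq_le_ballCount s x hl t)
    · positivity
  have hint : ∀ b ∈ bins, Integrable ((bin b).indicator fun _ => n b ^ 2) := fun b _ =>
    (integrable_indicator_iff measurableSet_Ico).2 (integrableOn_const measure_Ico_lt_top.ne)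
  have hbin (b : ℤ) : ∫ t, (bin b).indicator (fun _ => n b ^ 2) t = l⁻¹ * n b ^ 2 := by
    have hlen : volume.real (bin b) = l⁻¹ := by
      rw [Real.volume_real_Ico_of_le (by gcongr; linarith)]
      ring
    rw [integral_indicator_const _ measurableSet_Ico, hlen, smul_eq_mul]
  have hmono := integral_mono (integrable_finsetSum _ hint) (integrable_ballCount_sq s x l⁻¹)
    fun t => by simpa only [Finset.sum_apply] using hpointwise t
  simp only [integral_finsetSum _ hint, hbin, ← Finset.mul_sum] at hmono
  rwa [inv_mul_le_iff₀ hl] at hmono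

-- Binning the frequencies at scale `1 / l` reduces this to Schur's test for `binKernel`.
theorem integral_norm_expSum_sq_le {l : ℝ} (hl : 0 < l) :
    ∫ ξ in (0 : ℝ)..l, ‖expSum s x ξ‖ ^ 2 ≤
      2 * sieveConst * l ^ 2 * ∫ t, (ballCount s x l⁻¹ t : ℝ) ^ 2 := by
  have := sieveConst_pos
  calc ∫ ξ in (0 : ℝ)..l, ‖expSum s x ξ‖ ^ 2
      ≤ 2 * ∑ i ∈ s, ∑ j ∈ s, fejer (2 * l) (x i - x j) :=
        integral_norm_expSum_sq_le_sum_fejer s x hl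
    _ ≤ 2 * (l * ∑ i ∈ s, ∑ j ∈ s, binKernel (⌊l * x i⌋ - ⌊l * x j⌋)) := by
        simp_rw [Finset.mul_sum _ _ l]
        gcongr
        exact fejer_le_binKernel hl _ _
    _ ≤ 2 * (l * (sieveConst * (l * ∫ t, (ballCount s x l⁻¹ t : ℝ) ^ 2))) := by
        gcongr
        refine (sum_sum_comp_sub_le summable_binKernel binKernel_nonneg s _).trans ?_
        exact mul_le_mul_of_nonneg_left (sum_card_floor_eq_sq_le s x hl) sieveConst_pos.le
    _ = 2 * sieveConst * l ^ 2 * ∫ t, (ballCount s x l⁻¹ t : ℝ) ^ 2 := by ring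

end BallCount

/-! ### Words and tiles -/

section Words

variable {q : ℕ}

/-- The words of length `n` in the alphabet `Fin q`. -/
def words (q n : ℕ) : Finset (List (Fin q)) :=
  Finset.univ.map ⟨fun d : Fin n → Fin q => List.ofFn d, List.ofFn_injective⟩

@[simp]
lemma mem_words {n : ℕ} {w : List (Fin q)} : w ∈ words q n ↔ w.length = n := by
  simp only [words, Finset.mem_map, Finset.mem_univ, true_and, Function.Embedding.coeFn_mk]
  constructor
  · rintro ⟨d, rfl⟩
    exact List.length_ofFn
  · rintro rfl
    exact ⟨w.get, List.ofFn_get w⟩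

@[simp]
lemma card_words (q n : ℕ) : #(words q n) = q ^ n := by simp [words]

lemma exists_append_of_mem_words_add {N M : ℕ} {w : List (Fin q)} (hw : w ∈ words q (N + M)) :
    ∃ u ∈ words q N, ∃ v ∈ words q M, u ++ v = w := by
  rw [mem_words] at hw
  exact ⟨w.take N, by simp [hw], w.drop N, by simp [hw], List.take_append_drop N w⟩

/-- The words of length `N` with prefix `u`. -/
def extensions (N : ℕ) (u : List (Fin q)) : Finset (List (Fin q)) :=
  {w ∈ words q N | u <+: w}

lemma card_extensions {N : ℕ} {u : List (Fin q)} (hu : u.length ≤ N) :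
    #(extensions N u) = q ^ (N - u.length) := by
  have : extensions N u =
      (words q (N - u.length)).map ⟨(u ++ ·), List.append_right_injective u⟩ := by
    ext w
    simp only [extensions, Finset.mem_filter, mem_words, Finset.mem_map,
      Function.Embedding.coeFn_mk]
    constructor
    · rintro ⟨hw, v, rfl⟩
      exact ⟨v, by simp only [← hw, List.length_append, Nat.add_sub_cancel_left], rfl⟩
    · rintro ⟨v, hv, rfl⟩
      exact ⟨by rw [List.length_append]; omega, List.prefix_append u v⟩
  rw [this, Finset.card_map, card_words]

-- Kraft's inequality, relative to the cylinders that a prefix-free code fills.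
theorem sum_inv_pow_length_le [NeZero q] {N : ℕ} {F S : Finset (List (Fin q))}
    (hF : IsAntichain (· <+: ·) (F : Set (List (Fin q)))) (hN : ∀ u ∈ F, u.length ≤ N)
    (hS : ∀ u ∈ F, extensions N u ⊆ S) :
    ∑ u ∈ F, ((q : ℝ) ^ u.length)⁻¹ ≤ #S / (q : ℝ) ^ N := by
  have hq : (0 : ℝ) < q := Nat.cast_pos.2 (NeZero.pos q)
  have hdisj : (F : Set (List (Fin q))).PairwiseDisjoint (extensions N) := by
    intro u hu v hv huv
    refine Finset.disjoint_left.2 fun w hwu hwv => ?_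
    rcases List.prefix_or_prefix_of_prefix (Finset.mem_filter.1 hwu).2
      (Finset.mem_filter.1 hwv).2 with h | h
    exacts [hF hu hv huv h, hF hv hu huv.symm h]
  have hcard : ∑ u ∈ F, #(extensions N u) ≤ #S := by
    rw [← Finset.card_biUnion hdisj]
    exact Finset.card_le_card (Finset.biUnion_subset.2 hS)
  calc ∑ u ∈ F, ((q : ℝ) ^ u.length)⁻¹
      = ∑ u ∈ F, (#(extensions N u) : ℝ) / (q : ℝ) ^ N := by
        refine Finset.sum_congr rfl fun u hu => ?_
        rw [card_extensions (hN u hu), Nat.cast_pow, pow_sub₀ _ hq.ne' (hN u hu)]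
        field_simp
    _ ≤ #S / (q : ℝ) ^ N := by
        rw [← Finset.sum_div]
        gcongr
        exact_mod_cast hcard

end Words

section Tiles

variable {q : ℕ} (a : Fin q → ℝ)

/-- The point `∑ k, q⁻ᵏ⁻¹ * a (w k)` with base `q` expansion `w`, for the digits `a`. -/
def wordPoint : List (Fin q) → ℝ
  | [] => 0
  | j :: w => (a j + wordPoint w) / q

lemma wordPoint_ofFn {n : ℕ} (d : Fin n → Fin q) :
    wordPoint a (List.ofFn d) = ∑ k, a (d k) / (q : ℝ) ^ (k.1 + 1) := by
  induction n with
  | zero => simp [wordPoint]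
  | succ n ih =>
    rw [List.ofFn_succ, wordPoint, ih, Fin.sum_univ_succ, add_div, Finset.sum_div]
    simp only [Fin.val_zero, zero_add, pow_one, Fin.val_succ, pow_succ (q : ℝ) (_ + 1), div_div]

lemma abs_wordPoint_le [q.AtLeastTwo] {a : Fin q → ℝ} (ha : ∀ j, |a j| ≤ 1) (w : List (Fin q)) :
    |wordPoint a w| ≤ 1 - ((q : ℝ) ^ w.length)⁻¹ := by
  have hq : (2 : ℝ) ≤ q := Nat.ofNat_le_cast.2 (Nat.AtLeastTwo.prop)
  induction w with
  | nil => simp [wordPoint]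
  | cons j w ih =>
    rw [wordPoint, abs_div, Nat.abs_cast, div_le_iff₀ (by positivity), List.length_cons, pow_succ,
      mul_inv, sub_mul, inv_mul_cancel_right₀ (by positivity)]
    linarith [abs_add_le (a j) (wordPoint a w), ha j]

/-- The affine map sending the tile of `u` onto the unit interval `[-1, 1]`. -/
def zoom (u : List (Fin q)) (x : ℝ) : ℝ := (q : ℝ) ^ u.length * (x - wordPoint a u)

/-- The interval of radius `q⁻ⁿ` about the point with word `w`, of length `n`. -/
def tile (w : List (Fin q)) : Set ℝ := closedBall (wordPoint a w) ((q : ℝ) ^ w.length)⁻¹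

lemma volume_real_tile (w : List (Fin q)) : volume.real (tile a w) = 2 * ((q : ℝ) ^ w.length)⁻¹ :=
  Real.volume_real_closedBall (by positivity)

lemma mem_tile_nil {x : ℝ} : x ∈ tile a [] ↔ |x| ≤ 1 := by
  simp [tile, wordPoint]

variable {a}

lemma mem_tile_iff [NeZero q] {u : List (Fin q)} {x : ℝ} : x ∈ tile a u ↔ |zoom a u x| ≤ 1 := by
  have hq : (0 : ℝ) < q ^ u.length := pow_pos (Nat.cast_pos.2 (NeZero.pos q)) _
  rw [tile, mem_closedBall, Real.dist_eq, zoom, abs_mul, abs_of_pos hq, ← le_inv_mul_iff₀ hq,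
    mul_one]

lemma zoom_append [NeZero q] (u v : List (Fin q)) (x : ℝ) :
    zoom a (u ++ v) x = zoom a v (zoom a u x) := by
  have hq : (q : ℝ) ≠ 0 := Nat.cast_ne_zero.2 (NeZero.ne q)
  induction u generalizing x with
  | nil => simp [zoom, wordPoint]
  | cons j u ih =>
    have hcons (w : List (Fin q)) : zoom a (j :: w) x = zoom a w (q * x - a j) := by
      simp only [zoom, wordPoint, List.length_cons, pow_succ]
      field_simp
      ring
    rw [List.cons_append, hcons, ih, ← hcons]

lemma mem_tile_append [NeZero q] {u v : List (Fin q)} {x : ℝ} :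
    x ∈ tile a (u ++ v) ↔ zoom a u x ∈ tile a v := by
  rw [mem_tile_iff, mem_tile_iff, zoom_append]

lemma wordPoint_mem_tile (w : List (Fin q)) : wordPoint a w ∈ tile a w :=
  mem_closedBall_self (by positivity)

lemma tile_subset_tile_nil [q.AtLeastTwo] (ha : ∀ j, |a j| ≤ 1) (w : List (Fin q)) :
    tile a w ⊆ tile a [] := by
  intro x hx
  rw [tile, mem_closedBall, Real.dist_eq] at hx
  rw [mem_tile_nil]
  linarith [abs_sub_abs_le_abs_sub x (wordPoint a w), abs_wordPoint_le ha w]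

lemma tile_subset_of_prefix [q.AtLeastTwo] (ha : ∀ j, |a j| ≤ 1) {u w : List (Fin q)}
    (h : u <+: w) : tile a w ⊆ tile a u := by
  obtain ⟨v, rfl⟩ := h
  intro x hx
  have h0 := tile_subset_tile_nil ha v (mem_tile_append.1 hx)
  rwa [mem_tile_nil, ← mem_tile_iff] at h0

lemma volume_preimage_zoom [NeZero q] (u : List (Fin q)) (E : Set ℝ) :
    volume (zoom a u ⁻¹' E) = ENNReal.ofReal ((q : ℝ) ^ u.length)⁻¹ * volume E := by
  have hq : (0 : ℝ) < q ^ u.length := pow_pos (Nat.cast_pos.2 (NeZero.pos q)) _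
  have htrans : zoom a u ⁻¹' E = (· + -wordPoint a u) ⁻¹' (((q : ℝ) ^ u.length * ·) ⁻¹' E) := rfl
  rw [htrans, measure_preimage_add_right, Real.volume_preimage_mul_left hq.ne',
    abs_of_pos (inv_pos.2 hq)]

lemma integral_comp_zoom (u : List (Fin q)) (f : ℝ → ℝ) :
    ∫ x, f (zoom a u x) = ((q : ℝ) ^ u.length)⁻¹ * ∫ x, f x := by
  rw [show (fun x => f (zoom a u x)) = fun x => f ((q : ℝ) ^ u.length * (x - wordPoint a u))
    from rfl, integral_sub_right_eq_self fun x => f ((q : ℝ) ^ u.length * x),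
    Measure.integral_comp_mul_left, abs_of_nonneg (by positivity), smul_eq_mul]

lemma integrable_comp_zoom [NeZero q] (u : List (Fin q)) {f : ℝ → ℝ} (hf : Integrable f) :
    Integrable fun x => f (zoom a u x) :=
  (hf.comp_mul_left' (pow_ne_zero _ (Nat.cast_ne_zero.2 (NeZero.ne q)))).comp_sub_right _

variable (a)

/-- The number of tiles of generation `n` that contain a point. -/
def multiplicity (n : ℕ) : ℝ → ℕ := ballCount (words q n) (wordPoint a) ((q : ℝ) ^ n)⁻¹

open Classical in
lemma multiplicity_eq_card (n : ℕ) (x : ℝ) :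
    multiplicity a n x = #{w ∈ words q n | x ∈ tile a w} := by
  rw [multiplicity, ballCount]
  congr 1
  refine Finset.filter_congr fun w hw => ?_
  rw [tile, mem_closedBall, mem_words.1 hw]

lemma multiplicity_zero_le_one (x : ℝ) : multiplicity a 0 x ≤ 1 :=
  (Finset.card_filter_le _ _).trans_eq (card_words q 0)

lemma integral_multiplicity [NeZero q] (n : ℕ) : ∫ x, (multiplicity a n x : ℝ) = 2 := by
  have hq : (q : ℝ) ≠ 0 := Nat.cast_ne_zero.2 (NeZero.ne q)
  rw [multiplicity, integral_ballCount _ _ (by positivity), card_words]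
  push_cast
  field_simp

/-- The union of the tiles of generation `n`. -/
def cover (n : ℕ) : Set ℝ := ⋃ w ∈ words q n, tile a w

lemma mem_cover {a : Fin q → ℝ} {n : ℕ} {x : ℝ} :
    x ∈ cover a n ↔ ∃ w ∈ words q n, x ∈ tile a w := by
  simp only [cover, mem_iUnion, exists_prop]

lemma exists_zoom_mem_cover [NeZero q] {a : Fin q → ℝ} {N M : ℕ} {x : ℝ}
    (hx : x ∈ cover a (N + M)) :
    ∃ u ∈ words q N, x ∈ zoom a u ⁻¹' cover a M := by
  obtain ⟨w, hw, hx⟩ := mem_cover.1 hx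
  obtain ⟨u, hu, v, hv, rfl⟩ := exists_append_of_mem_words_add hw
  exact ⟨u, hu, mem_cover.2 ⟨v, hv, mem_tile_append.1 hx⟩⟩

lemma isCompact_cover (n : ℕ) : IsCompact (cover a n) :=
  (words q n).isCompact_biUnion fun _ _ => isCompact_closedBall _ _

/-- The Lebesgue measure of the union of the tiles of generation `n`. -/
def coverLength (n : ℕ) : ℝ := volume.real (cover a n)

lemma coverLength_le_two [NeZero q] (n : ℕ) : coverLength a n ≤ 2 := by
  have hq : (q : ℝ) ≠ 0 := Nat.cast_ne_zero.2 (NeZero.ne q)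
  refine (measureReal_biUnion_finset_le _ _).trans_eq ?_
  rw [Finset.sum_congr rfl fun w hw => by rw [volume_real_tile, mem_words.1 hw], Finset.sum_const,
    card_words, nsmul_eq_mul]
  push_cast
  field_simp

lemma coverLength_antitone [q.AtLeastTwo] {a : Fin q → ℝ} (ha : ∀ j, |a j| ≤ 1) :
    Antitone (coverLength a) := by
  intro n m hnm
  refine measureReal_mono (fun x hx => ?_) (isCompact_cover a n).measure_lt_top.ne
  obtain ⟨w, hw, hxw⟩ := mem_cover.1 hx
  exact mem_cover.2 ⟨w.take n, by simp [mem_words.1 hw, hnm],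
    tile_subset_of_prefix ha (List.take_prefix n w) hxw⟩

end Tiles

/-! ### Heavy words -/

section Heavy

variable {q : ℕ} (a : Fin q → ℝ) (K : ℝ)

/-- A word is heavy if some point of its tile lies in at least `K` tiles of the same generation. -/
def IsHeavy (u : List (Fin q)) : Prop := ∃ x ∈ tile a u, K ≤ multiplicity a u.length x

open Classical in
/-- The words of length `N` with a heavy prefix. -/
def heavyWords (N : ℕ) : Finset (List (Fin q)) :=
  {w ∈ words q N | ∃ u, u <+: w ∧ IsHeavy a K u}

/-- The proportion of words of length `N` with a heavy prefix. -/
def heavyDensity (N : ℕ) : ℝ := #(heavyWords a K N) / (q : ℝ) ^ N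

variable {a K}

lemma mem_heavyWords {N : ℕ} {w : List (Fin q)} :
    w ∈ heavyWords a K N ↔ w.length = N ∧ ∃ u, u <+: w ∧ IsHeavy a K u := by
  simp only [heavyWords, Finset.mem_filter, mem_words]

lemma heavyWords_subset_words (N : ℕ) : heavyWords a K N ⊆ words q N := fun _ hw =>
  mem_words.2 (mem_heavyWords.1 hw).1

lemma heavyDensity_nonneg (N : ℕ) : 0 ≤ heavyDensity a K N := by
  unfold heavyDensity
  positivity

lemma card_words_sdiff_heavyWords [NeZero q] (N : ℕ) :
    (#(words q N \ heavyWords a K N) : ℝ) = (q : ℝ) ^ N * (1 - heavyDensity a K N) := by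
  have hq : (q : ℝ) ≠ 0 := Nat.cast_ne_zero.2 (NeZero.ne q)
  rw [Finset.cast_card_sdiff (heavyWords_subset_words N), card_words, heavyDensity]
  push_cast
  field_simp

lemma heavyDensity_le_one [NeZero q] (N : ℕ) : heavyDensity a K N ≤ 1 := by
  have hq : (0 : ℝ) < q := Nat.cast_pos.2 (NeZero.pos q)
  have := card_words_sdiff_heavyWords (a := a) (K := K) N
  exact sub_nonneg.1 (nonneg_of_mul_nonneg_right (this ▸ Nat.cast_nonneg _) (pow_pos hq N))

lemma sum_inv_pow_length_le_heavyDensity [NeZero q] {N : ℕ} {F : Finset (List (Fin q))}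
    (hF : IsAntichain (· <+: ·) (F : Set (List (Fin q))))
    (hheavy : ∀ u ∈ F, u.length ≤ N ∧ IsHeavy a K u) :
    ∑ u ∈ F, ((q : ℝ) ^ u.length)⁻¹ ≤ heavyDensity a K N := by
  refine sum_inv_pow_length_le hF (fun u hu => (hheavy u hu).1) fun u hu w hw => ?_
  rw [extensions, Finset.mem_filter, mem_words] at hw
  exact mem_heavyWords.2 ⟨hw.1, u, hw.2, (hheavy u hu).2⟩

lemma exists_disjoint_heavy_cover [q.AtLeastTwo] (ha : ∀ j, |a j| ≤ 1) (N : ℕ) :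
    ∃ T : Finset (List (Fin q)), (∀ u ∈ T, u.length ≤ N ∧ IsHeavy a K u) ∧
      (T : Set (List (Fin q))).PairwiseDisjoint
        (fun u => closedBall (wordPoint a u) (3 * ((q : ℝ) ^ u.length)⁻¹)) ∧
      ⋃ w ∈ heavyWords a K N, tile a w ⊆
        ⋃ u ∈ T, closedBall (wordPoint a u) (15 * ((q : ℝ) ^ u.length)⁻¹) := by
  have hq : (1 : ℝ) ≤ q := Nat.one_le_cast.2 (NeZero.one_le)
  obtain ⟨t, htheavy, htdisj, htcover⟩ :=
    Vitali.exists_disjoint_subfamily_covering_enlargement_closedBall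
      {u : List (Fin q) | u.length ≤ N ∧ IsHeavy a K u} (wordPoint a)
      (fun u => 3 * ((q : ℝ) ^ u.length)⁻¹) 3
      (fun u _ => by linarith [inv_le_one_of_one_le₀ (one_le_pow₀ hq (n := u.length))])
      5 (by norm_num)
  have htfin : t.Finite := (List.finite_length_le (Fin q) N).subset fun u hu => (htheavy hu).1
  refine ⟨htfin.toFinset, fun u hu => htheavy (htfin.mem_toFinset.1 hu),
    by rwa [htfin.coe_toFinset], iUnion₂_subset fun w hw x hx => ?_⟩
  obtain ⟨hwN, u, huw, hu⟩ := mem_heavyWords.1 hw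
  obtain ⟨v, hv, huv⟩ := htcover u ⟨hwN ▸ huw.length_le, hu⟩
  have hr : 0 ≤ ((q : ℝ) ^ u.length)⁻¹ := by positivity
  have hxu : x ∈ closedBall (wordPoint a u) (3 * ((q : ℝ) ^ u.length)⁻¹) :=
    closedBall_subset_closedBall (by linarith) (tile_subset_of_prefix ha huw hx)
  have hxv := huv hxu
  rw [← mul_assoc, show (5 : ℝ) * 3 = 15 by norm_num] at hxv
  exact mem_biUnion (htfin.mem_toFinset.2 hv) hxv

lemma tile_subset_closedBall_three {u v : List (Fin q)} (hlen : v.length = u.length) {x : ℝ}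
    (hu : x ∈ tile a u) (hv : x ∈ tile a v) :
    tile a v ⊆ closedBall (wordPoint a u) (3 * ((q : ℝ) ^ u.length)⁻¹) := by
  intro y hy
  have hyv := mem_closedBall.1 hy
  have hxv := mem_closedBall'.1 hv
  have hxu := mem_closedBall.1 hu
  rw [hlen] at hyv hxv
  rw [mem_closedBall]
  linarith [dist_triangle4 y (wordPoint a v) x (wordPoint a u)]

-- At a point of multiplicity `K` in the tile of `u`, the `K` tiles meeting there are themselves
-- heavy and stay within the tripled tile of `u`, so they form a prefix-free family.
lemma mul_sum_inv_pow_length_le_heavyDensity [q.AtLeastTwo] (ha : ∀ j, |a j| ≤ 1) {N : ℕ}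
    {T : Finset (List (Fin q))} (hT : ∀ u ∈ T, u.length ≤ N ∧ IsHeavy a K u)
    (hdisj : (T : Set (List (Fin q))).PairwiseDisjoint
      fun u => closedBall (wordPoint a u) (3 * ((q : ℝ) ^ u.length)⁻¹)) :
    K * ∑ u ∈ T, ((q : ℝ) ^ u.length)⁻¹ ≤ heavyDensity a K N := by
  classical
  choose! X hXtile hXK using fun u hu => (hT u hu).2
  let pile (u : List (Fin q)) : Finset (List (Fin q)) := {v ∈ words q u.length | X u ∈ tile a v}
  have mem_pile {u v : List (Fin q)} : v ∈ pile u ↔ v.length = u.length ∧ X u ∈ tile a v := by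
    simp only [pile, Finset.mem_filter, mem_words]
  have htile {u v : List (Fin q)} (hu : u ∈ T) (hv : v ∈ pile u) :
      tile a v ⊆ closedBall (wordPoint a u) (3 * ((q : ℝ) ^ u.length)⁻¹) :=
    tile_subset_closedBall_three (mem_pile.1 hv).1 (hXtile u hu) (mem_pile.1 hv).2
  have heq {u u' v v' : List (Fin q)} (hu : u ∈ T) (hv : v ∈ pile u) (hu' : u' ∈ T)
      (hv' : v' ∈ pile u') (h : v <+: v') : u = u' := by
    by_contra hne
    have hpt := wordPoint_mem_tile (a := a) v'
    exact disjoint_left.1 (hdisj hu hu' hne) (htile hu hv (tile_subset_of_prefix ha h hpt))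
      (htile hu' hv' hpt)
  have hanti : IsAntichain (· <+: ·) (T.biUnion pile : Set (List (Fin q))) := by
    intro v hv v' hv' hne h
    obtain ⟨u, hu, hv⟩ := Finset.mem_biUnion.1 hv
    obtain ⟨u', hu', hv'⟩ := Finset.mem_biUnion.1 hv'
    obtain rfl := heq hu hv hu' hv' h
    exact hne (h.eq_of_length ((mem_pile.1 hv).1.trans (mem_pile.1 hv').1.symm))
  calc K * ∑ u ∈ T, ((q : ℝ) ^ u.length)⁻¹
      ≤ ∑ u ∈ T, ∑ v ∈ pile u, ((q : ℝ) ^ v.length)⁻¹ := by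
        rw [Finset.mul_sum]
        refine Finset.sum_le_sum fun u hu => ?_
        rw [Finset.sum_congr rfl fun v hv => by rw [(mem_pile.1 hv).1], Finset.sum_const,
          nsmul_eq_mul, ← multiplicity_eq_card]
        gcongr
        exact hXK u hu
    _ = ∑ v ∈ T.biUnion pile, ((q : ℝ) ^ v.length)⁻¹ := by
        refine (Finset.sum_biUnion fun u hu u' hu' hne => ?_).symm
        exact Finset.disjoint_left.2 fun v hv hv' => hne (heq hu hv hu' hv' List.prefix_rfl)
    _ ≤ heavyDensity a K N := by
        refine sum_inv_pow_length_le_heavyDensity hanti fun v hv => ?_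
        obtain ⟨u, hu, hv⟩ := Finset.mem_biUnion.1 hv
        obtain ⟨hlen, hXv⟩ := mem_pile.1 hv
        exact ⟨hlen ▸ (hT u hu).1, X u, hXv, hlen ▸ hXK u hu⟩

theorem volume_real_heavy_tiles_le [q.AtLeastTwo] (ha : ∀ j, |a j| ≤ 1) (hK : 0 < K) (N : ℕ) :
    volume.real (⋃ w ∈ heavyWords a K N, tile a w) ≤ 30 / K * heavyDensity a K N := by
  obtain ⟨T, hT, hdisj, hcover⟩ := exists_disjoint_heavy_cover (K := K) ha N
  have hcompact := T.isCompact_biUnion fun u _ =>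
    isCompact_closedBall (wordPoint a u) (15 * ((q : ℝ) ^ u.length)⁻¹)
  calc volume.real (⋃ w ∈ heavyWords a K N, tile a w)
      ≤ ∑ u ∈ T, volume.real (closedBall (wordPoint a u) (15 * ((q : ℝ) ^ u.length)⁻¹)) :=
        (measureReal_mono hcover hcompact.measure_lt_top.ne).trans
          (measureReal_biUnion_finset_le _ _)
    _ = 30 / K * (K * ∑ u ∈ T, ((q : ℝ) ^ u.length)⁻¹) := by
        simp_rw [Finset.mul_sum]
        refine Finset.sum_congr rfl fun u _ => ?_
        rw [Real.volume_real_closedBall (by positivity)]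
        field_simp
        norm_num
    _ ≤ 30 / K * heavyDensity a K N := by
        gcongr
        exact mul_sum_inv_pow_length_le_heavyDensity ha hT hdisj

theorem coverLength_add_le [q.AtLeastTwo] (ha : ∀ j, |a j| ≤ 1) (hK : 0 < K) (N M : ℕ) :
    coverLength a (N + M) ≤
      30 / K * heavyDensity a K N + (1 - heavyDensity a K N) * coverLength a M := by
  have hq : (q : ℝ) ≠ 0 := Nat.cast_ne_zero.2 (NeZero.ne q)
  let heavy := ⋃ w ∈ heavyWords a K N, tile a w
  let light := ⋃ w ∈ words q N \ heavyWords a K N, zoom a w ⁻¹' cover a M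
  have hsub : cover a (N + M) ⊆ heavy ∪ light := by
    intro x hx
    obtain ⟨w, hw, hxw⟩ := exists_zoom_mem_cover hx
    by_cases hheavy : w ∈ heavyWords a K N
    · obtain ⟨v, -, hxv⟩ := mem_cover.1 hxw
      exact Or.inl (mem_biUnion hheavy
        (tile_subset_of_prefix ha (List.prefix_append w v) (mem_tile_append.2 hxv)))
    · exact Or.inr (mem_biUnion (Finset.mem_sdiff.2 ⟨hw, hheavy⟩) hxw)
  have hheavy_fin : volume heavy ≠ ⊤ :=
    ((heavyWords a K N).isCompact_biUnion fun _ _ => isCompact_closedBall _ _).measure_lt_top.ne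
  have hlight_fin : volume light ≠ ⊤ := by
    refine (measure_biUnion_lt_top (Finset.finite_toSet _) fun w _ => ?_).ne
    rw [volume_preimage_zoom]
    exact ENNReal.mul_lt_top ENNReal.ofReal_lt_top (isCompact_cover a M).measure_lt_top
  have hlight : volume.real light ≤ (1 - heavyDensity a K N) * coverLength a M := by
    refine (measureReal_biUnion_finset_le _ _).trans_eq ?_
    have hterm : ∀ w ∈ words q N \ heavyWords a K N,
        volume.real (zoom a w ⁻¹' cover a M) = ((q : ℝ) ^ N)⁻¹ * coverLength a M := fun w hw => by
      rw [measureReal_def, volume_preimage_zoom, ENNReal.toReal_mul,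
        ENNReal.toReal_ofReal (by positivity), mem_words.1 (Finset.mem_sdiff.1 hw).1, coverLength,
        measureReal_def]
    rw [Finset.sum_congr rfl hterm, Finset.sum_const, nsmul_eq_mul, card_words_sdiff_heavyWords]
    field_simp
  calc coverLength a (N + M)
      ≤ volume.real heavy + volume.real light :=
        (measureReal_mono hsub (measure_union_ne_top hheavy_fin hlight_fin)).trans
          (measureReal_union_le _ _)
    _ ≤ _ := add_le_add (volume_real_heavy_tiles_le ha hK N) hlight

theorem coverLength_mul_le [q.AtLeastTwo] (ha : ∀ j, |a j| ≤ 1) (hK : 0 < K) (N j : ℕ) :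
    coverLength a (j * N) ≤ 30 / K + 2 * (1 - heavyDensity a K N) ^ j := by
  have hρ := sub_nonneg.2 (heavyDensity_le_one (a := a) (K := K) N)
  induction j with
  | zero =>
    have : 0 ≤ 30 / K := by positivity
    linarith [coverLength_le_two a (0 * N)]
  | succ j ih =>
    calc coverLength a ((j + 1) * N)
        = coverLength a (N + j * N) := by rw [add_mul, one_mul, add_comm]
      _ ≤ 30 / K * heavyDensity a K N + (1 - heavyDensity a K N) * coverLength a (j * N) :=
          coverLength_add_le ha hK N (j * N)
      _ ≤ 30 / K * heavyDensity a K N +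
          (1 - heavyDensity a K N) * (30 / K + 2 * (1 - heavyDensity a K N) ^ j) := by gcongr
      _ = 30 / K + 2 * (1 - heavyDensity a K N) ^ (j + 1) := by ring

end Heavy

/-! ### Energy of the multiplicity function -/

section Energy

variable {q : ℕ} (a : Fin q → ℝ) (K : ℝ)

open Classical in
/-- The heavy words of length at most `n` without heavy proper prefixes. -/
def minimalHeavyWords (n : ℕ) : Finset (List (Fin q)) :=
  {u ∈ (List.finite_length_le (Fin q) n).toFinset |
    IsHeavy a K u ∧ ∀ v, v <+: u → IsHeavy a K v → v = u}

open Classical in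
/-- The number of tiles of generation `n` that contain a point and are not below a heavy one. -/
def lightMultiplicity (n : ℕ) (x : ℝ) : ℕ := #{w ∈ words q n \ heavyWords a K n | x ∈ tile a w}

variable {a K}

lemma mem_minimalHeavyWords {n : ℕ} {u : List (Fin q)} :
    u ∈ minimalHeavyWords a K n ↔
      u.length ≤ n ∧ IsHeavy a K u ∧ ∀ v, v <+: u → IsHeavy a K v → v = u := by
  simp only [minimalHeavyWords, Finset.mem_filter, Finite.mem_toFinset, mem_ofPred_eq]

lemma minimalHeavyWords_mono {m n : ℕ} (h : m ≤ n) :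
    minimalHeavyWords a K m ⊆ minimalHeavyWords a K n := fun _ hu =>
  have hu := mem_minimalHeavyWords.1 hu
  mem_minimalHeavyWords.2 ⟨hu.1.trans h, hu.2⟩

lemma sum_minimalHeavyWords_le [NeZero q] (n : ℕ) :
    ∑ u ∈ minimalHeavyWords a K n, ((q : ℝ) ^ u.length)⁻¹ ≤ heavyDensity a K n := by
  refine sum_inv_pow_length_le_heavyDensity (fun u hu v hv hne h => ?_) fun u hu => ?_
  · exact hne ((mem_minimalHeavyWords.1 hv).2.2 u h (mem_minimalHeavyWords.1 hu).2.1)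
  · exact ⟨(mem_minimalHeavyWords.1 hu).1, (mem_minimalHeavyWords.1 hu).2.1⟩

lemma exists_minimalHeavy_prefix {n : ℕ} {w : List (Fin q)} (hw : w ∈ heavyWords a K n) :
    ∃ u ∈ minimalHeavyWords a K n, u <+: w := by
  obtain ⟨hlen, hheavy⟩ := mem_heavyWords.1 hw
  obtain ⟨u, ⟨huw, hu⟩, hmin⟩ := (measure List.length).wf.has_min
    {u : List (Fin q) | u <+: w ∧ IsHeavy a K u} hheavy
  refine ⟨u, mem_minimalHeavyWords.2 ⟨hlen ▸ huw.length_le, hu, fun v hvu hv => ?_⟩, huw⟩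
  exact hvu.eq_of_length (hvu.length_le.antisymm (not_lt.1 (hmin v ⟨hvu.trans huw, hv⟩)))

lemma multiplicity_lt_of_not_isHeavy {u : List (Fin q)} {x : ℝ} (hu : ¬IsHeavy a K u)
    (hx : x ∈ tile a u) : (multiplicity a u.length x : ℝ) < K :=
  not_le.1 fun h => hu ⟨x, hx, h⟩

lemma ne_nil_of_isHeavy (hK : 1 < K) {u : List (Fin q)} (hu : IsHeavy a K u) : u ≠ [] := by
  rintro rfl
  obtain ⟨x, -, hx⟩ := hu
  have : (multiplicity a 0 x : ℝ) ≤ 1 := Nat.cast_le_one.2 (multiplicity_zero_le_one a x)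
  exact absurd (hK.trans_le hx) this.not_gt

lemma lightMultiplicity_le_multiplicity (n : ℕ) (x : ℝ) :
    lightMultiplicity a K n x ≤ multiplicity a n x := by
  rw [multiplicity_eq_card, lightMultiplicity]
  gcongr
  exact Finset.sdiff_subset

lemma lightMultiplicity_le (hK : 0 ≤ K) (n : ℕ) (x : ℝ) : (lightMultiplicity a K n x : ℝ) ≤ K := by
  classical
  rcases (lightMultiplicity a K n x).eq_zero_or_pos with h | h
  · rwa [h, Nat.cast_zero]
  · obtain ⟨w, hw⟩ := Finset.card_pos.1 h
    obtain ⟨hw, hx⟩ := Finset.mem_filter.1 hw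
    obtain ⟨hw, hlight⟩ := Finset.mem_sdiff.1 hw
    have hlen := mem_words.1 hw
    have hnot : ¬IsHeavy a K w := fun hheavy =>
      hlight (mem_heavyWords.2 ⟨hlen, w, List.prefix_rfl, hheavy⟩)
    have hlt := multiplicity_lt_of_not_isHeavy hnot hx
    rw [hlen] at hlt
    exact (Nat.cast_le.2 (lightMultiplicity_le_multiplicity n x)).trans hlt.le

lemma multiplicity_le_light_add_sum [NeZero q] (n : ℕ) (x : ℝ) :
    multiplicity a n x ≤ lightMultiplicity a K n x +
      ∑ u ∈ minimalHeavyWords a K n, multiplicity a (n - u.length) (zoom a u x) := by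
  classical
  let below (u : List (Fin q)) : Finset (List (Fin q)) :=
    {v ∈ words q (n - u.length) | zoom a u x ∈ tile a v}
  have hsub : {w ∈ words q n | x ∈ tile a w} ⊆
      {w ∈ words q n \ heavyWords a K n | x ∈ tile a w} ∪
        (minimalHeavyWords a K n).biUnion fun u => (below u).image (u ++ ·) := by
    intro w hw
    obtain ⟨hw, hx⟩ := Finset.mem_filter.1 hw
    by_cases hheavy : w ∈ heavyWords a K n
    · obtain ⟨u, hu, v, rfl⟩ := exists_minimalHeavy_prefix hheavy
      have hv : v ∈ words q (n - u.length) := by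
        rw [mem_words, ← mem_words.1 hw, List.length_append, Nat.add_sub_cancel_left]
      exact Finset.mem_union_right _ (Finset.mem_biUnion.2 ⟨u, hu, Finset.mem_image_of_mem _
        (Finset.mem_filter.2 ⟨hv, mem_tile_append.1 hx⟩)⟩)
    · exact Finset.mem_union_left _ (Finset.mem_filter.2 ⟨Finset.mem_sdiff.2 ⟨hw, hheavy⟩, hx⟩)
  simp_rw [multiplicity_eq_card]
  refine (Finset.card_le_card hsub).trans ((Finset.card_union_le _ _).trans ?_)
  exact Nat.add_le_add_left
    (Finset.card_biUnion_le.trans (Finset.sum_le_sum fun _ _ => Finset.card_image_le)) _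

lemma mem_tile_of_multiplicity_zoom_ne_zero [q.AtLeastTwo] (ha : ∀ j, |a j| ≤ 1) {k : ℕ}
    {u : List (Fin q)} {x : ℝ} (h : multiplicity a k (zoom a u x) ≠ 0) : x ∈ tile a u := by
  classical
  rw [multiplicity_eq_card] at h
  obtain ⟨v, hv⟩ := Finset.card_ne_zero.1 h
  exact tile_subset_of_prefix ha (List.prefix_append u v)
    (mem_tile_append.2 (Finset.mem_filter.1 hv).2)

-- The parents of minimal heavy words are not heavy, so fewer than `K` of them meet at a point.
lemma card_minimalHeavy_level_le [q.AtLeastTwo] (ha : ∀ j, |a j| ≤ 1) (hK : 0 ≤ K) {n l : ℕ}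
    {x : ℝ} {F : Finset (List (Fin q))} (hF : F ⊆ minimalHeavyWords a K n)
    (hlen : ∀ u ∈ F, u.length = l + 1) (hx : ∀ u ∈ F, x ∈ tile a u) : (#F : ℝ) ≤ q * K := by
  classical
  rcases F.eq_empty_or_nonempty with rfl | ⟨u₀, hu₀⟩
  · simpa using by positivity
  have hparent : ∀ u ∈ F, (u.take l).length = l ∧ x ∈ tile a (u.take l) := fun u hu =>
    ⟨by simp [hlen u hu], tile_subset_of_prefix ha (List.take_prefix l u) (hx u hu)⟩
  have hmult : (multiplicity a l x : ℝ) ≤ K := by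
    obtain ⟨hl, hx₀⟩ := hparent u₀ hu₀
    have hlight : ¬IsHeavy a K (u₀.take l) := fun h => by
      have := (mem_minimalHeavyWords.1 (hF hu₀)).2.2 _ (List.take_prefix l u₀) h
      have := hlen u₀ hu₀
      simp_all
    exact hl ▸ (multiplicity_lt_of_not_isHeavy hlight hx₀).le
  have hcard : #F ≤ q * multiplicity a l x := by
    rw [multiplicity_eq_card]
    refine Finset.card_le_mul_card_image_of_maps_to (f := List.take l) (fun u hu =>
      Finset.mem_filter.2 ⟨mem_words.2 (hparent u hu).1, (hparent u hu).2⟩) q fun v hv => ?_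
    have hvl : v.length = l := mem_words.1 (Finset.mem_filter.1 hv).1
    calc #{u ∈ F | u.take l = v} ≤ #(extensions (l + 1) v) := by
          refine Finset.card_le_card fun u hu => ?_
          obtain ⟨huF, rfl⟩ := Finset.mem_filter.1 hu
          exact Finset.mem_filter.2 ⟨mem_words.2 (hlen u huF), List.take_prefix l u⟩
      _ = q := by rw [card_extensions (by omega), hvl, Nat.add_sub_cancel_left, pow_one]
  calc (#F : ℝ) ≤ q * multiplicity a l x := by exact_mod_cast hcard
    _ ≤ q * K := by gcongr

open Classical in
lemma card_minimalHeavy_mem_tile_le [q.AtLeastTwo] (ha : ∀ j, |a j| ≤ 1) (hK : 1 < K) (n : ℕ)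
    (x : ℝ) : (#{u ∈ minimalHeavyWords a K n | x ∈ tile a u} : ℝ) ≤ q * K * n := by
  have hpos {u : List (Fin q)} (hu : u ∈ minimalHeavyWords a K n) : 0 < u.length :=
    List.length_pos_iff.2 (ne_nil_of_isHeavy hK (mem_minimalHeavyWords.1 hu).2.1)
  have hmaps : ∀ u ∈ ({u ∈ minimalHeavyWords a K n | x ∈ tile a u} : Finset (List (Fin q))),
      u.length - 1 ∈ Finset.range n := fun u hu => by
    have hu := (Finset.mem_filter.1 hu).1
    have := hpos hu
    have := (mem_minimalHeavyWords.1 hu).1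
    exact Finset.mem_range.2 (by omega)
  rw [Finset.card_eq_sum_card_fiberwise hmaps, Nat.cast_sum]
  refine (Finset.sum_le_card_nsmul _ _ (q * K) fun l _ => ?_).trans_eq
    (by rw [Finset.card_range, nsmul_eq_mul, mul_comm])
  have hmem {u : List (Fin q)} (hu : u ∈ ({u ∈ {u ∈ minimalHeavyWords a K n | x ∈ tile a u} |
      u.length - 1 = l} : Finset (List (Fin q)))) :
      u ∈ minimalHeavyWords a K n ∧ x ∈ tile a u ∧ u.length - 1 = l := by
    simpa only [Finset.mem_filter, and_assoc] using hu
  refine card_minimalHeavy_level_le ha (by linarith) (fun u hu => (hmem hu).1) (l := l)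
    (fun u hu => ?_) fun u hu => (hmem hu).2.1
  have := hpos (hmem hu).1
  have := (hmem hu).2.2
  omega

lemma sq_multiplicity_le [q.AtLeastTwo] (ha : ∀ j, |a j| ≤ 1) (hK : 1 < K) (n : ℕ) (x : ℝ) :
    (multiplicity a n x : ℝ) ^ 2 ≤ 2 * K * multiplicity a n x + 2 * q * K * n *
      ∑ u ∈ minimalHeavyWords a K n, (multiplicity a (n - u.length) (zoom a u x) : ℝ) ^ 2 := by
  classical
  let f (u : List (Fin q)) : ℝ := multiplicity a (n - u.length) (zoom a u x)
  have hsplit : (multiplicity a n x : ℝ) ≤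
      lightMultiplicity a K n x + ∑ u ∈ minimalHeavyWords a K n, f u := by
    simp only [f]
    exact_mod_cast multiplicity_le_light_add_sum n x
  have hheavy : (∑ u ∈ minimalHeavyWords a K n, f u) ^ 2 ≤
      q * K * n * ∑ u ∈ minimalHeavyWords a K n, f u ^ 2 := by
    have hsupp : ∀ u ∈ minimalHeavyWords a K n, f u ≠ 0 → x ∈ tile a u := fun u _ hu =>
      mem_tile_of_multiplicity_zoom_ne_zero ha (Nat.cast_ne_zero.1 hu)
    rw [← Finset.sum_filter_of_ne hsupp]
    refine sq_sum_le_card_mul_sum_sq.trans ?_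
    gcongr
    · exact card_minimalHeavy_mem_tile_le ha hK n x
    · exact Finset.filter_subset _ _
  have hlight : (lightMultiplicity a K n x : ℝ) ^ 2 ≤ K * multiplicity a n x := by
    rw [sq]
    gcongr
    exacts [lightMultiplicity_le (by linarith) n x, lightMultiplicity_le_multiplicity n x]
  calc (multiplicity a n x : ℝ) ^ 2
      ≤ (lightMultiplicity a K n x + ∑ u ∈ minimalHeavyWords a K n, f u) ^ 2 := by gcongr
    _ ≤ 2 * ((lightMultiplicity a K n x : ℝ) ^ 2 + (∑ u ∈ minimalHeavyWords a K n, f u) ^ 2) :=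
        add_sq_le
    _ ≤ 2 * (K * multiplicity a n x +
          q * K * n * ∑ u ∈ minimalHeavyWords a K n, f u ^ 2) := by gcongr
    _ = _ := by ring

lemma integral_sq_multiplicity_le_add_sum [q.AtLeastTwo] (ha : ∀ j, |a j| ≤ 1) (hK : 1 < K)
    (n : ℕ) :
    ∫ x, (multiplicity a n x : ℝ) ^ 2 ≤ 4 * K + 2 * q * K * n * ∑ u ∈ minimalHeavyWords a K n,
      ((q : ℝ) ^ u.length)⁻¹ * ∫ x, (multiplicity a (n - u.length) x : ℝ) ^ 2 := by
  have hint : Integrable fun x => (multiplicity a n x : ℝ) := integrable_ballCount _ _ _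
  have hint_sq (k : ℕ) : Integrable fun x => (multiplicity a k x : ℝ) ^ 2 :=
    integrable_ballCount_sq _ _ _
  have hint_zoom : ∀ u ∈ minimalHeavyWords a K n,
      Integrable fun x => (multiplicity a (n - u.length) (zoom a u x) : ℝ) ^ 2 := fun u _ =>
    integrable_comp_zoom u (hint_sq _)
  have hint_sum := (integrable_finsetSum _ hint_zoom).const_mul (2 * q * K * n)
  refine (integral_mono (hint_sq n) ((hint.const_mul (2 * K)).add hint_sum)
    fun x => sq_multiplicity_le ha hK n x).trans_eq ?_
  simp only [Pi.add_apply]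
  rw [integral_add (hint.const_mul _) hint_sum, integral_const_mul, integral_const_mul,
    integral_multiplicity, integral_finsetSum _ hint_zoom]
  simp_rw [fun u => integral_comp_zoom (a := a) u
    fun y => (multiplicity a (n - u.length) y : ℝ) ^ 2]
  ring

theorem integral_sq_multiplicity_le [q.AtLeastTwo] (ha : ∀ j, |a j| ≤ 1) (hK : 1 < K) {N : ℕ}
    (hρ : 4 * q * K * N * heavyDensity a K N ≤ 1) {n : ℕ} (hn : n ≤ N) :
    ∫ x, (multiplicity a n x : ℝ) ^ 2 ≤ 8 * K := by
  induction n using Nat.strong_induction_on with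
  | _ n ih =>
    have hsum : ∑ u ∈ minimalHeavyWords a K n,
        ((q : ℝ) ^ u.length)⁻¹ * ∫ x, (multiplicity a (n - u.length) x : ℝ) ^ 2 ≤
          heavyDensity a K N * (8 * K) := by
      calc _ ≤ ∑ u ∈ minimalHeavyWords a K n, ((q : ℝ) ^ u.length)⁻¹ * (8 * K) := by
            refine Finset.sum_le_sum fun u hu => ?_
            obtain ⟨hlen, hheavy, -⟩ := mem_minimalHeavyWords.1 hu
            have := List.length_pos_iff.2 (ne_nil_of_isHeavy hK hheavy)
            gcongr
            exact ih _ (by omega) (by omega)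
        _ ≤ heavyDensity a K N * (8 * K) := by
            rw [← Finset.sum_mul]
            gcongr
            exact (Finset.sum_le_sum_of_subset_of_nonneg (minimalHeavyWords_mono hn)
              fun _ _ _ => by positivity).trans (sum_minimalHeavyWords_le N)
    have hρ0 := heavyDensity_nonneg (a := a) (K := K) N
    calc ∫ x, (multiplicity a n x : ℝ) ^ 2
        ≤ 4 * K + 2 * q * K * n * (heavyDensity a K N * (8 * K)) := by
          refine (integral_sq_multiplicity_le_add_sum ha hK n).trans ?_
          gcongr
      _ ≤ 4 * K + 2 * q * K * N * (heavyDensity a K N * (8 * K)) := by gcongr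
      _ = 4 * K + 4 * K * (4 * q * K * N * heavyDensity a K N) := by ring
      _ ≤ 8 * K := by nlinarith

end Energy

/-! ### Riesz products -/

section Riesz

variable {q : ℕ} (a : Fin q → ℝ)

/-- The modulus of the Fourier transform of the uniform probability measure on the digits. -/
def mask (ξ : ℝ) : ℝ := ‖expSum Finset.univ a ξ‖ / q

/-- The squared modulus of the Fourier transform of the uniform probability measure on the points
with words of length `n`. -/
def rieszProd (n : ℕ) (ξ : ℝ) : ℝ := ∏ k ∈ Finset.range n, mask a (ξ / (q : ℝ) ^ (k + 1)) ^ 2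

@[fun_prop]
lemma continuous_rieszProd (n : ℕ) : Continuous (rieszProd a n) := by
  unfold rieszProd mask
  fun_prop

lemma rieszProd_nonneg (n : ℕ) (ξ : ℝ) : 0 ≤ rieszProd a n ξ :=
  Finset.prod_nonneg fun _ _ => sq_nonneg _

lemma rieszProd_add (n m : ℕ) (ξ : ℝ) :
    rieszProd a (n + m) ξ = rieszProd a n ξ * rieszProd a m (ξ / (q : ℝ) ^ n) := by
  simp only [rieszProd, Finset.prod_range_add, div_div, ← pow_add, add_assoc]

lemma rieszProd_succ' (n : ℕ) (ξ : ℝ) :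
    rieszProd a (n + 1) ξ = mask a (ξ / q) ^ 2 * rieszProd a n (ξ / q) := by
  rw [add_comm, rieszProd_add]
  simp [rieszProd]

lemma expSum_words_wordPoint (n : ℕ) (ξ : ℝ) :
    expSum (words q n) (wordPoint a) ξ =
      ∏ k ∈ Finset.range n, expSum Finset.univ a (ξ / (q : ℝ) ^ (k + 1)) := by
  simp only [expSum, words, Finset.sum_map, Function.Embedding.coeFn_mk, wordPoint_ofFn]
  rw [Finset.prod_range, Finset.prod_univ_sum, Fintype.piFinset_univ]
  refine Finset.sum_congr rfl fun d _ => ?_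
  rw [← Complex.exp_sum, Finset.sum_mul, Complex.ofReal_sum, Finset.sum_mul]
  simp only [div_mul_eq_mul_div, mul_div_assoc]

lemma norm_expSum_words_sq [NeZero q] (n : ℕ) (ξ : ℝ) :
    ‖expSum (words q n) (wordPoint a) ξ‖ ^ 2 = ((q : ℝ) ^ n) ^ 2 * rieszProd a n ξ := by
  have hq : (q : ℝ) ≠ 0 := Nat.cast_ne_zero.2 (NeZero.ne q)
  simp only [expSum_words_wordPoint, rieszProd, mask, Finset.prod_pow, Finset.prod_div_distrib,
    Finset.prod_const, Finset.card_range, norm_prod]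
  field_simp

lemma div_le_integral_rieszProd [NeZero q] (n : ℕ) {T : ℝ} (hT : 0 ≤ T) :
    T / (2 * (q : ℝ) ^ n) ≤ ∫ ξ in (0 : ℝ)..T, rieszProd a n ξ := by
  have hq : (0 : ℝ) < (q : ℝ) ^ n := pow_pos (Nat.cast_pos.2 (NeZero.pos q)) n
  have h := half_mul_card_le_integral_norm_expSum_sq (words q n) (wordPoint a) hT
  simp_rw [norm_expSum_words_sq] at h
  rw [intervalIntegral.integral_const_mul, card_words, Nat.cast_pow] at h
  refine le_of_mul_le_mul_left (le_trans (le_of_eq ?_) h) (pow_pos hq 2)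
  field_simp

lemma integral_rieszProd_le [NeZero q] (n : ℕ) :
    ∫ ξ in (0 : ℝ)..(q : ℝ) ^ n, rieszProd a n ξ ≤
      2 * sieveConst * ∫ x, (multiplicity a n x : ℝ) ^ 2 := by
  have hq : (0 : ℝ) < (q : ℝ) ^ n := pow_pos (Nat.cast_pos.2 (NeZero.pos q)) n
  have h := integral_norm_expSum_sq_le (words q n) (wordPoint a) hq
  simp_rw [norm_expSum_words_sq] at h
  rw [intervalIntegral.integral_const_mul] at h
  refine le_of_mul_le_mul_left (h.trans_eq ?_) (pow_pos hq 2)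
  simp only [multiplicity]
  ring

variable {a}

lemma one_sub_abs_le_mask [NeZero q] (ha : ∀ j, |a j| ≤ 1) (ξ : ℝ) : 1 - |ξ| ≤ mask a ξ := by
  have hq : (0 : ℝ) < q := Nat.cast_pos.2 (NeZero.pos q)
  have hterm (j : Fin q) : ‖Complex.exp ((a j * ξ : ℝ) * Complex.I) - 1‖ ≤ |ξ| := by
    rw [mul_comm]
    refine Real.norm_exp_I_mul_ofReal_sub_one_le.trans ?_
    rw [Real.norm_eq_abs, abs_mul]
    exact mul_le_of_le_one_left (abs_nonneg ξ) (ha j)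
  have hsum : ‖expSum Finset.univ a ξ - q‖ ≤ q * |ξ| := by
    have : expSum Finset.univ a ξ - q =
        ∑ j, (Complex.exp ((a j * ξ : ℝ) * Complex.I) - 1) := by
      simp [expSum]
    rw [this]
    exact (norm_sum_le_of_le _ fun j _ => hterm j).trans_eq (by simp)
  have htri := norm_sub_norm_le (q : ℂ) (q - expSum Finset.univ a ξ)
  rw [sub_sub_cancel, Complex.norm_natCast, norm_sub_rev] at htri
  rw [mask, le_div_iff₀ hq]
  linarith

lemma quarter_le_rieszProd (hq : 3 ≤ q) (ha : ∀ j, |a j| ≤ 1) (n : ℕ) {ξ : ℝ} (hξ : |ξ| ≤ 1) :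
    1 / 4 ≤ rieszProd a n ξ := by
  have : NeZero q := ⟨by omega⟩
  have hq' : (3 : ℝ) ≤ q := by exact_mod_cast hq
  have hprod : 1 / 2 + ((q : ℝ) ^ n)⁻¹ / 2 ≤
      ∏ k ∈ Finset.range n, mask a (ξ / (q : ℝ) ^ (k + 1)) := by
    induction n with
    | zero => norm_num
    | succ n ih =>
      set t := ((q : ℝ) ^ (n + 1))⁻¹
      have ht : 0 < t := by positivity
      have htn : ((q : ℝ) ^ n)⁻¹ = q * t := by
        simp only [t, pow_succ]
        field_simp
      have ht1 : q * t ≤ 1 := htn ▸ inv_le_one_of_one_le₀ (one_le_pow₀ (by linarith))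
      have hmask : 1 - t ≤ mask a (ξ / (q : ℝ) ^ (n + 1)) := by
        refine le_trans ?_ (one_sub_abs_le_mask ha _)
        rw [abs_div, abs_of_nonneg (by positivity : (0 : ℝ) ≤ (q : ℝ) ^ (n + 1)), div_eq_mul_inv]
        linarith [mul_le_of_le_one_left ht.le hξ]
      rw [htn] at ih
      rw [Finset.prod_range_succ]
      calc 1 / 2 + t / 2 ≤ (1 / 2 + q * t / 2) * (1 - t) := by nlinarith
        _ ≤ _ := mul_le_mul ih hmask (by nlinarith) (le_trans (by positivity) ih)
  have hhalf : (1 / 2 : ℝ) ≤ ∏ k ∈ Finset.range n, mask a (ξ / (q : ℝ) ^ (k + 1)) :=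
    le_trans (le_add_of_nonneg_right (by positivity)) hprod
  rw [rieszProd, Finset.prod_pow]
  calc (1 / 4 : ℝ) = (1 / 2) ^ 2 := by norm_num
    _ ≤ _ := by gcongr

lemma integral_rieszProd_le_of_heavyDensity_le [q.AtLeastTwo] (ha : ∀ j, |a j| ≤ 1) {K : ℝ}
    (hK : 1 < K) {N : ℕ} (hρ : 4 * q * K * N * heavyDensity a K N ≤ 1) {n : ℕ} (hn : n ≤ N) :
    ∫ ξ in (0 : ℝ)..(q : ℝ) ^ n, rieszProd a n ξ ≤ 16 * sieveConst * K := by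
  have := sieveConst_pos
  calc _ ≤ 2 * sieveConst * ∫ x, (multiplicity a n x : ℝ) ^ 2 := integral_rieszProd_le a n
    _ ≤ 2 * sieveConst * (8 * K) := by
        gcongr
        exact integral_sq_multiplicity_le ha hK hρ hn
    _ = 16 * sieveConst * K := by ring

lemma one_sub_pow_le_inv {K ρ : ℝ} {j : ℕ} (hK : 0 < K) (hρ : ρ ≤ 1) (hKj : K ≤ j * ρ) :
    (1 - ρ) ^ j ≤ K⁻¹ := by
  calc (1 - ρ) ^ j ≤ Real.exp (-ρ) ^ j :=
        pow_le_pow_left₀ (sub_nonneg.2 hρ) (Real.one_sub_le_exp_neg ρ) j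
    _ = (Real.exp (j * ρ))⁻¹ := by rw [← Real.exp_nat_mul, mul_neg, Real.exp_neg]
    _ ≤ K⁻¹ := by
        gcongr
        linarith [Real.add_one_le_exp (j * ρ)]

section Windows

variable {m : ℕ} {c : ℝ} (hq : 3 ≤ q) (ha : ∀ j, |a j| ≤ 1) (hc : 0 ≤ c)
  (hlow : ∀ ξ ∈ Icc 1 ((q : ℝ) ^ m), c ≤ rieszProd a m ξ)
include hq ha hc hlow

omit hc in
lemma mul_rieszProd_le_rieszProd_add (n r : ℕ) {ξ : ℝ}
    (hξ : ξ ∈ Icc ((q : ℝ) ^ n) ((q : ℝ) ^ (n + m))) :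
    c / 4 * rieszProd a n ξ ≤ rieszProd a (n + m + r) ξ := by
  have hqn : (0 : ℝ) < (q : ℝ) ^ n := pow_pos (by exact_mod_cast (by omega : 0 < q)) n
  have hξ0 : 0 < ξ := hqn.trans_le hξ.1
  have hmid : c ≤ rieszProd a m (ξ / (q : ℝ) ^ n) := by
    refine hlow _ ⟨(one_le_div₀ hqn).2 hξ.1, (div_le_iff₀ hqn).2 ?_⟩
    rw [← pow_add, add_comm]
    exact hξ.2
  have htail : 1 / 4 ≤ rieszProd a r (ξ / (q : ℝ) ^ (n + m)) := by
    refine quarter_le_rieszProd hq ha r ?_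
    rw [abs_of_pos (by positivity)]
    exact div_le_one_of_le₀ hξ.2 (by positivity)
  have hn := rieszProd_nonneg a n ξ
  calc c / 4 * rieszProd a n ξ = rieszProd a n ξ * c * (1 / 4) := by ring
    _ ≤ rieszProd a n ξ * rieszProd a m (ξ / (q : ℝ) ^ n) *
          rieszProd a r (ξ / (q : ℝ) ^ (n + m)) := by
        gcongr
        exact mul_nonneg hn (rieszProd_nonneg _ _ _)
    _ = rieszProd a (n + m + r) ξ := by rw [rieszProd_add, rieszProd_add]

lemma window_le_integral_rieszProd {n N : ℕ} (hN : n + m ≤ N)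
    (hE : ∫ ξ in (0 : ℝ)..(q : ℝ) ^ n, rieszProd a n ξ ≤ (q : ℝ) ^ m / 4) :
    c / 4 * ((q : ℝ) ^ m / 4) ≤
      ∫ ξ in (q : ℝ) ^ n..(q : ℝ) ^ (n + m), rieszProd a N ξ := by
  have : NeZero q := ⟨by omega⟩
  have hq1 : (1 : ℝ) ≤ q := by exact_mod_cast (by omega : 1 ≤ q)
  obtain ⟨r, rfl⟩ := Nat.exists_eq_add_of_le hN
  have hint (k : ℕ) (s t : ℝ) : IntervalIntegrable (rieszProd a k) volume s t :=
    (continuous_rieszProd a k).intervalIntegrable s t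
  have hmass : (q : ℝ) ^ m / 4 ≤ ∫ ξ in (q : ℝ) ^ n..(q : ℝ) ^ (n + m), rieszProd a n ξ := by
    have htotal := div_le_integral_rieszProd a n (T := (q : ℝ) ^ (n + m)) (by positivity)
    rw [pow_add, mul_comm (2 : ℝ), mul_div_mul_left _ _ (by positivity), ← pow_add,
      ← intervalIntegral.integral_add_adjacent_intervals (hint n 0 ((q : ℝ) ^ n))
        (hint n _ _)] at htotal
    linarith
  calc c / 4 * ((q : ℝ) ^ m / 4)
      ≤ c / 4 * ∫ ξ in (q : ℝ) ^ n..(q : ℝ) ^ (n + m), rieszProd a n ξ := by gcongr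
    _ = ∫ ξ in (q : ℝ) ^ n..(q : ℝ) ^ (n + m), c / 4 * rieszProd a n ξ :=
        (intervalIntegral.integral_const_mul _ _).symm
    _ ≤ ∫ ξ in (q : ℝ) ^ n..(q : ℝ) ^ (n + m), rieszProd a (n + m + r) ξ :=
        intervalIntegral.integral_mono_on (pow_le_pow_right₀ hq1 (Nat.le_add_right n m))
          ((hint n _ _).const_mul _) (hint _ _ _)
          fun _ hξ => mul_rieszProd_le_rieszProd_add hq ha hlow n r hξ

-- The `Q` disjoint windows `[qⁿ, qⁿ⁺ᵐ]`, `n = 0, m, 2m, …`, each carry a fixed share of the mass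
-- available in total.
lemma windows_mul_le {Q : ℕ}
    (hE : ∀ n ≤ Q * m, ∫ ξ in (0 : ℝ)..(q : ℝ) ^ n, rieszProd a n ξ ≤ (q : ℝ) ^ m / 4) :
    Q * (c / 4) ≤ 1 := by
  have hqm : (0 : ℝ) < (q : ℝ) ^ m / 4 := by
    have : (0 : ℝ) < q := by exact_mod_cast (by omega : 0 < q)
    positivity
  have hcont := continuous_rieszProd a (Q * m)
  have hmass (i : ℕ) (hi : i ≤ Q) : i * (c / 4 * ((q : ℝ) ^ m / 4)) ≤
      ∫ ξ in (0 : ℝ)..(q : ℝ) ^ (i * m), rieszProd a (Q * m) ξ := by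
    induction i with
    | zero =>
      rw [Nat.cast_zero, zero_mul]
      exact intervalIntegral.integral_nonneg (by positivity) fun ξ _ => rieszProd_nonneg _ _ _
    | succ i ih =>
      have hle : i * m + m ≤ Q * m := by
        rw [← Nat.succ_mul]
        exact Nat.mul_le_mul_right m hi
      have hwindow := window_le_integral_rieszProd hq ha hc hlow hle (hE _ (by omega))
      rw [Nat.succ_mul, ← intervalIntegral.integral_add_adjacent_intervals
        (hcont.intervalIntegrable 0 ((q : ℝ) ^ (i * m))) (hcont.intervalIntegrable _ _)]
      push_cast
      linarith [ih (by omega)]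
  have htotal := (hmass Q le_rfl).trans (hE _ le_rfl)
  rw [← mul_assoc] at htotal
  exact le_of_mul_le_mul_right (by rwa [one_mul]) hqm

-- If heavy words were scarce, there would be too little energy for the windows.
lemma one_lt_mul_heavyDensity {Q : ℕ} (hQ : 4 < Q * c) {K : ℝ} (hK : 1 < K)
    (hKq : 16 * sieveConst * K ≤ (q : ℝ) ^ m / 4) :
    1 < 4 * q * K * (Q * m : ℕ) * heavyDensity a K (Q * m) := by
  have : q.AtLeastTwo := ⟨by omega⟩
  by_contra! hρ
  have hE (n : ℕ) (hn : n ≤ Q * m) :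
      ∫ ξ in (0 : ℝ)..(q : ℝ) ^ n, rieszProd a n ξ ≤ (q : ℝ) ^ m / 4 :=
    (integral_rieszProd_le_of_heavyDensity_le ha hK hρ hn).trans hKq
  linarith [windows_mul_le hq ha hc hlow hE]

theorem coverLength_le_of_le_rieszProd {Q : ℕ} (hQ : 4 < Q * c) :
    coverLength a (4 * q ^ (2 * m + 1) * (Q * m) ^ 2) ≤ 2048 * sieveConst * ((q : ℝ) ^ m)⁻¹ := by
  have : q.AtLeastTwo := ⟨by omega⟩
  have hS := five_le_sieveConst
  have hqm : (0 : ℝ) < (q : ℝ) ^ m := pow_pos (by exact_mod_cast (by omega : 0 < q)) m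
  set K : ℝ := (q : ℝ) ^ m / (64 * sieveConst) with hK
  set N := Q * m
  set ρ := heavyDensity a K N
  set j := 4 * q ^ (2 * m + 1) * N with hj
  have hK0 : 0 < K := by positivity
  have hKq : K ≤ (q : ℝ) ^ m := div_le_self hqm.le (by linarith)
  have hbound : 2048 * sieveConst * ((q : ℝ) ^ m)⁻¹ = 32 / K := by
    rw [hK]
    field_simp
    norm_num
  rw [hbound]
  rcases le_or_gt K 1 with hK1 | hK1
  · refine (coverLength_le_two a _).trans ((le_div_iff₀ hK0).2 (by linarith))
  have hdense : 1 < 4 * q * K * N * ρ := by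
    refine one_lt_mul_heavyDensity hq ha hc hlow hQ hK1 (le_of_eq ?_)
    rw [hK]
    field_simp
    norm_num
  have hKj : K ≤ j * ρ := calc
    K ≤ K * (4 * q * K * N * ρ) := le_mul_of_one_le_right hK0.le hdense.le
    _ = 4 * q * K ^ 2 * N * ρ := by ring
    _ ≤ 4 * q * ((q : ℝ) ^ m) ^ 2 * N * ρ := by
        have : 0 ≤ ρ := heavyDensity_nonneg N
        gcongr
    _ = j * ρ := by
        rw [hj]
        push_cast
        ring
  calc coverLength a (4 * q ^ (2 * m + 1) * N ^ 2) = coverLength a (j * N) := by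
        rw [hj, sq, ← mul_assoc]
    _ ≤ 30 / K + 2 * (1 - ρ) ^ j := coverLength_mul_le ha hK0 N j
    _ ≤ 30 / K + 2 * K⁻¹ := by
        gcongr
        exact one_sub_pow_le_inv hK0 (heavyDensity_le_one N) hKj
    _ = 32 / K := by ring

end Windows

end Riesz

/-! ### Three digits -/

section ThreeDigits

lemma norm_circle_sub_one_le (z : Circle) : ‖(z : ℂ) - 1‖ ≤ 2 :=
  (norm_sub_le _ _).trans_eq (by rw [Circle.norm_coe, norm_one]; norm_num)

-- `z³ - 1 = (1 + z + w)(z² - 1) - (zw + z + w)(z - 1)`, and `zw + z + w` is a rotation of the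
-- conjugate of `1 + z + w`.
lemma norm_cube_sub_one_le_norm_add (z w : Circle) :
    ‖(z : ℂ) ^ 3 - 1‖ ≤ 4 * ‖(1 + z + w : ℂ)‖ := by
  have hz : (z : ℂ) * starRingEnd ℂ z = 1 := by
    rw [← Circle.coe_inv_eq_conj, ← Circle.coe_mul, mul_inv_cancel, Circle.coe_one]
  have hw : (w : ℂ) * starRingEnd ℂ w = 1 := by
    rw [← Circle.coe_inv_eq_conj, ← Circle.coe_mul, mul_inv_cancel, Circle.coe_one]
  have hconj : ‖(z * w + z + w : ℂ)‖ = ‖(1 + z + w : ℂ)‖ := by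
    have : (z * w + z + w : ℂ) = z * w * starRingEnd ℂ (1 + z + w : ℂ) := by
      simp only [map_add, map_one]
      linear_combination (-w : ℂ) * hz - z * hw
    rw [this, norm_mul, norm_mul, Circle.norm_coe, Circle.norm_coe, RCLike.norm_conj, one_mul,
      one_mul]
  calc ‖(z : ℂ) ^ 3 - 1‖
      = ‖(1 + z + w : ℂ) * ((z ^ 2 : Circle) - 1) - (z * w + z + w) * (z - 1)‖ := by
        push_cast
        ring_nf
    _ ≤ ‖(1 + z + w : ℂ)‖ * 2 + ‖(1 + z + w : ℂ)‖ * 2 := by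
        refine (norm_sub_le _ _).trans ?_
        rw [norm_mul, norm_mul, hconj]
        gcongr <;> exact norm_circle_sub_one_le _
    _ = 4 * ‖(1 + z + w : ℂ)‖ := by ring

lemma norm_pow_sub_one_le (z : Circle) (n : ℕ) : ‖(z : ℂ) ^ n - 1‖ ≤ n * ‖(z : ℂ) - 1‖ := by
  rw [← geom_sum_mul, norm_mul]
  gcongr
  exact (norm_sum_le_of_le _ fun k _ => by
    rw [norm_pow, Circle.norm_coe, one_pow]).trans_eq (by simp)

lemma coe_exp_div_pow (t : ℝ) (n : ℕ) [NeZero n] :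
    (Circle.exp (t / n) : ℂ) ^ n = Circle.exp t := by
  rw [← Circle.coe_pow, ← Circle.exp_nsmul, nsmul_eq_mul,
    mul_div_cancel₀ _ (Nat.cast_ne_zero.2 (NeZero.ne n))]

variable (a : Fin 3 → ℝ)

/-- The distance from `1` of the phases, at frequency `y`, of the digits relative to the middle
one. -/
def phaseGap (y : ℝ) : ℝ :=
  max ‖(Circle.exp ((a 0 - a 1) * y) : ℂ) - 1‖ ‖(Circle.exp ((a 2 - a 1) * y) : ℂ) - 1‖

lemma phaseGap_nonneg (y : ℝ) : 0 ≤ phaseGap a y := le_max_of_le_left (norm_nonneg _)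

lemma mask_eq_norm_add (y : ℝ) :
    mask a y =
      ‖(1 + Circle.exp ((a 0 - a 1) * y) + Circle.exp ((a 2 - a 1) * y) : ℂ)‖ / 3 := by
  have hfactor : expSum Finset.univ a y = Circle.exp (a 1 * y) *
      (1 + Circle.exp ((a 0 - a 1) * y) + Circle.exp ((a 2 - a 1) * y) : ℂ) := by
    simp only [expSum, Fin.sum_univ_three, mul_add, mul_one, ← Circle.coe_exp, ← Circle.coe_mul,
      ← Circle.exp_add]
    ring_nf
  rw [mask, hfactor, norm_mul, Circle.norm_coe, one_mul, Nat.cast_ofNat]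

lemma phaseGap_le_mask_div (y : ℝ) : phaseGap a y ≤ 12 * mask a (y / (3 : ℕ)) := by
  have hcube (t : ℝ) : ‖(Circle.exp (t * y) : ℂ) - 1‖ =
      ‖(Circle.exp (t * (y / (3 : ℕ))) : ℂ) ^ 3 - 1‖ := by
    rw [← mul_div_assoc, coe_exp_div_pow]
  rw [mask_eq_norm_add, phaseGap, hcube, hcube]
  set z := Circle.exp ((a 0 - a 1) * (y / (3 : ℕ)))
  set w := Circle.exp ((a 2 - a 1) * (y / (3 : ℕ)))
  refine max_le ((norm_cube_sub_one_le_norm_add z w).trans_eq (by ring))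
    ((norm_cube_sub_one_le_norm_add w z).trans_eq ?_)
  rw [add_right_comm]
  ring

lemma phaseGap_le_phaseGap_div (y : ℝ) : phaseGap a y ≤ 3 * phaseGap a (y / (3 : ℕ)) := by
  have htriple (t : ℝ) : ‖(Circle.exp (t * y) : ℂ) - 1‖ ≤
      3 * ‖(Circle.exp (t * (y / (3 : ℕ))) : ℂ) - 1‖ := by
    rw [← coe_exp_div_pow (t * y) 3, mul_div_assoc]
    exact norm_pow_sub_one_le _ 3
  refine max_le ((htriple _).trans ?_) ((htriple _).trans ?_) <;> gcongr
  exacts [le_max_left _ _, le_max_right _ _]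

lemma one_sub_phaseGap_le_mask (y : ℝ) : 1 - 2 / 3 * phaseGap a y ≤ mask a y := by
  rw [mask_eq_norm_add]
  set z : ℂ := ((Circle.exp ((a 0 - a 1) * y) : Circle) : ℂ)
  set w : ℂ := ((Circle.exp ((a 2 - a 1) * y) : Circle) : ℂ)
  have hz1 : ‖z - 1‖ ≤ phaseGap a y := le_max_left _ _
  have hw1 : ‖w - 1‖ ≤ phaseGap a y := le_max_right _ _
  have htri : ‖(1 + z + w) - (z - 1) - (w - 1)‖ ≤ ‖1 + z + w‖ + ‖z - 1‖ + ‖w - 1‖ :=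
    (norm_sub_le _ _).trans (by gcongr; exact norm_sub_le _ _)
  rw [show (1 + z + w) - (z - 1) - (w - 1) = 3 by ring, Complex.norm_ofNat] at htri
  linarith

lemma phaseGap_le_mul_mask (y : ℝ) :
    phaseGap a y ≤ 24 * (phaseGap a (y / (3 : ℕ)) * mask a (y / (3 : ℕ))) := by
  have hgap := phaseGap_nonneg a (y / (3 : ℕ))
  have hmask : 0 ≤ mask a (y / (3 : ℕ)) := div_nonneg (norm_nonneg _) (Nat.cast_nonneg _)
  rcases le_total (phaseGap a (y / (3 : ℕ))) (1 / 2) with h | h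
  · have : 2 / 3 ≤ mask a (y / (3 : ℕ)) := by linarith [one_sub_phaseGap_le_mask a (y / (3 : ℕ))]
    nlinarith [phaseGap_le_phaseGap_div a y]
  · nlinarith [phaseGap_le_mask_div a y]

theorem sq_phaseGap_le_rieszProd (m : ℕ) (y : ℝ) :
    (phaseGap a y / (2 * 24 ^ m)) ^ 2 ≤ rieszProd a m y := by
  induction m generalizing y with
  | zero =>
    have : phaseGap a y ≤ 2 := max_le (norm_circle_sub_one_le _) (norm_circle_sub_one_le _)
    rw [rieszProd, Finset.range_zero, Finset.prod_empty]
    exact pow_le_one₀ (div_nonneg (phaseGap_nonneg a y) (by positivity)) (by linarith)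
  | succ m ih =>
    have h0 := phaseGap_nonneg a y
    calc (phaseGap a y / (2 * 24 ^ (m + 1))) ^ 2
        ≤ (24 * (phaseGap a (y / (3 : ℕ)) * mask a (y / (3 : ℕ))) / (2 * 24 ^ (m + 1))) ^ 2 := by
          gcongr
          exact phaseGap_le_mul_mask a y
      _ = mask a (y / (3 : ℕ)) ^ 2 * (phaseGap a (y / (3 : ℕ)) / (2 * 24 ^ m)) ^ 2 := by
          rw [pow_succ (24 : ℝ)]
          field_simp
      _ ≤ _ := by
          rw [rieszProd_succ']
          gcongr
          exact ih _

end ThreeDigits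

/-! ### Resonant directions -/

lemma exists_abs_sub_int_mul_pi_le (t : ℝ) :
    ∃ k : ℤ, |t - k * Real.pi| ≤ Real.pi / 2 * |Real.sin t| := by
  have hpi := Real.pi_pos
  refine ⟨round (t / Real.pi), ?_⟩
  set k := round (t / Real.pi)
  have hround : |t - k * Real.pi| ≤ Real.pi / 2 := calc
    |t - k * Real.pi| = |t / Real.pi - k| * Real.pi := by
      rw [← abs_of_pos hpi, ← abs_mul, abs_of_pos hpi, sub_mul, div_mul_cancel₀ _ hpi.ne']
    _ ≤ 1 / 2 * Real.pi := by
      gcongr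
      exact abs_sub_round _
    _ = Real.pi / 2 := by ring
  have hsin := Real.mul_abs_le_abs_sin hround
  rw [Real.sin_sub_int_mul_pi, abs_mul, abs_zpow, abs_neg, abs_one, one_zpow, one_mul] at hsin
  rw [← div_le_iff₀' (by positivity), div_eq_inv_mul, inv_div]
  exact hsin

lemma exists_abs_sub_two_pi_mul_int_le (t : ℝ) :
    ∃ k : ℤ, |t - 2 * Real.pi * k| ≤ Real.pi / 2 * ‖(Circle.exp t : ℂ) - 1‖ := by
  obtain ⟨k, hk⟩ := exists_abs_sub_int_mul_pi_le (t / 2)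
  refine ⟨k, ?_⟩
  have hnorm : ‖(Circle.exp t : ℂ) - 1‖ = 2 * |Real.sin (t / 2)| := by
    rw [Circle.coe_exp, mul_comm, Complex.norm_exp_I_mul_ofReal_sub_one, Real.norm_eq_abs, abs_mul,
      abs_two]
  rw [hnorm, show t - 2 * Real.pi * k = 2 * (t / 2 - k * Real.pi) by ring, abs_mul, abs_two]
  linarith

/-- The coordinate of the orthogonal projection onto the direction `θ`. -/
def proj (θ : ℝ) : ℂ →ₗ[ℝ] ℝ :=
  Complex.reLm ∘ₗ LinearMap.mulLeft ℝ (Complex.exp (-(θ : ℂ) * Complex.I))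

lemma proj_apply (θ : ℝ) (z : ℂ) :
    proj θ z = (Complex.exp (-(θ : ℂ) * Complex.I) * z).re := rfl

lemma proj_eq_add (θ : ℝ) (z : ℂ) : proj θ z = z.re * Real.cos θ + z.im * Real.sin θ := by
  rw [proj_apply, ← Complex.ofReal_neg, Complex.mul_re, Complex.exp_ofReal_mul_I_re,
    Complex.exp_ofReal_mul_I_im, Real.cos_neg, Real.sin_neg]
  ring

lemma abs_proj_le (θ : ℝ) (z : ℂ) : |proj θ z| ≤ ‖z‖ := by
  refine (Complex.abs_re_le_norm _).trans_eq ?_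
  rw [LinearMap.mulLeft_apply, norm_mul, ← Complex.ofReal_neg, Complex.norm_exp_ofReal_mul_I,
    one_mul]

lemma abs_proj_eq (θ : ℝ) (z : ℂ) :
    |proj θ z| = ‖z‖ * |Real.sin (θ - z.arg - Real.pi / 2)| := by
  have hpolar : proj θ z = ‖z‖ * Real.cos (θ - z.arg) := by
    rw [proj_eq_add, ← Complex.norm_mul_cos_arg, ← Complex.norm_mul_sin_arg, Real.cos_sub]
    ring
  rw [Real.sin_sub_pi_div_two, abs_neg, hpolar, abs_mul, abs_norm]

/-- The directions in `[0, π]` in which `z` projects into `[-η, η]`. -/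
def nearNormal (z : ℂ) (η : ℝ) : Set ℝ := {θ ∈ Icc 0 Real.pi | |proj θ z| ≤ η}

lemma measurableSet_nearNormal (z : ℂ) (η : ℝ) : MeasurableSet (nearNormal z η) := by
  have hclosed : IsClosed {θ : ℝ | |proj θ z| ≤ η} := by
    simp only [proj_eq_add]
    exact isClosed_le (by fun_prop) continuous_const
  exact measurableSet_Icc.inter hclosed.measurableSet

lemma nearNormal_subset {z : ℂ} (hz : z ≠ 0) (η : ℝ) :
    nearNormal z η ⊆ ⋃ k ∈ Finset.Icc (-2 : ℤ) 2,
      closedBall (z.arg + Real.pi / 2 + k * Real.pi) (Real.pi / 2 * (η / ‖z‖)) := by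
  rintro θ ⟨⟨hθ0, hθπ⟩, hη⟩
  have hpi := Real.pi_pos
  rw [abs_proj_eq, ← le_div_iff₀' (norm_pos_iff.2 hz)] at hη
  obtain ⟨k, hk⟩ := exists_abs_sub_int_mul_pi_le (θ - z.arg - Real.pi / 2)
  have hkπ := hk.trans (mul_le_of_le_one_right (by positivity) (Real.abs_sin_le_one _))
  rw [abs_le] at hkπ
  have harg := Complex.neg_pi_lt_arg z
  have harg' := Complex.arg_le_pi z
  have hlow : (-3 : ℝ) < k := by nlinarith
  have hupp : (k : ℝ) < 3 := by nlinarith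
  have hk2 : k ∈ Finset.Icc (-2 : ℤ) 2 := by
    have : -3 < k := by exact_mod_cast hlow
    have : k < 3 := by exact_mod_cast hupp
    exact Finset.mem_Icc.2 ⟨by omega, by omega⟩
  refine mem_biUnion hk2 ?_
  rw [mem_closedBall, Real.dist_eq]
  calc |θ - (z.arg + Real.pi / 2 + k * Real.pi)|
      = |θ - z.arg - Real.pi / 2 - k * Real.pi| := by ring_nf
    _ ≤ Real.pi / 2 * |Real.sin (θ - z.arg - Real.pi / 2)| := hk
    _ ≤ Real.pi / 2 * (η / ‖z‖) := by gcongr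

lemma volume_nearNormal_le {z : ℂ} (hz : z ≠ 0) (η : ℝ) :
    volume (nearNormal z η) ≤ ENNReal.ofReal (5 * Real.pi * η / ‖z‖) := by
  refine (measure_mono (nearNormal_subset hz η)).trans
    ((measure_biUnion_finset_le _ _).trans_eq ?_)
  have hcard : #(Finset.Icc (-2 : ℤ) 2) = 5 := rfl
  simp only [Real.volume_closedBall, Finset.sum_const, hcard]
  rw [← ENNReal.ofReal_nsmul, nsmul_eq_mul]
  congr 1
  push_cast
  ring

/-- The directions of the three vertices of the gasket, numbered by `α + 1`. -/
def vertex (j : Fin 3) : ℂ :=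
  Complex.exp (Complex.I * Real.pi * (1 / 2 + 2 / 3 * ((j : ℕ) - 1 : ℂ)))

lemma vertex_eq (j : Fin 3) :
    vertex j = Complex.exp ((Real.pi / 2 + 2 / 3 * Real.pi * ((j : ℕ) - 1) : ℝ) * Complex.I) := by
  rw [vertex]
  push_cast
  ring_nf

lemma norm_vertex (j : Fin 3) : ‖vertex j‖ = 1 := by
  rw [vertex_eq, Complex.norm_exp_ofReal_mul_I]

lemma vertex_zero : vertex 0 = ⟨√3 / 2, -(1 / 2)⟩ := by
  have hangle : Real.pi / 2 + 2 / 3 * Real.pi * (((0 : Fin 3) : ℕ) - 1) = -(Real.pi / 6) := by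
    norm_num
    ring
  rw [vertex_eq, hangle]
  apply Complex.ext <;>
    simp only [Complex.exp_ofReal_mul_I_re, Complex.exp_ofReal_mul_I_im, Real.cos_neg,
      Real.sin_neg, Real.cos_pi_div_six, Real.sin_pi_div_six]

lemma vertex_one : vertex 1 = Complex.I := by
  have hangle : Real.pi / 2 + 2 / 3 * Real.pi * (((1 : Fin 3) : ℕ) - 1) = Real.pi / 2 := by simp
  rw [vertex_eq, hangle, Complex.ofReal_div, Complex.ofReal_ofNat, Complex.exp_pi_div_two_mul_I]

lemma vertex_two : vertex 2 = ⟨-(√3 / 2), -(1 / 2)⟩ := by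
  have hangle : Real.pi / 2 + 2 / 3 * Real.pi * (((2 : Fin 3) : ℕ) - 1) =
      Real.pi / 6 + Real.pi := by
    norm_num
    ring
  rw [vertex_eq, hangle]
  apply Complex.ext <;>
    simp only [Complex.exp_ofReal_mul_I_re, Complex.exp_ofReal_mul_I_im, Real.cos_add_pi,
      Real.sin_add_pi, Real.cos_pi_div_six, Real.sin_pi_div_six]

/-- The digits whose base `3` expansions are the projections of the gasket in the direction `θ`. -/
def gasketDigits (θ : ℝ) (j : Fin 3) : ℝ := proj θ (vertex j)

lemma abs_gasketDigits_le (θ : ℝ) (j : Fin 3) : |gasketDigits θ j| ≤ 1 :=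
  (abs_proj_le θ _).trans_eq (norm_vertex j)

/-- In a direction orthogonal to this vector, the differences `gasketDigits θ 0 - gasketDigits θ 1`
and `gasketDigits θ 2 - gasketDigits θ 1` are in the ratio `j : l`. -/
def resonance (j l : ℤ) : ℂ := l • (vertex 0 - vertex 1) - j • (vertex 2 - vertex 1)

lemma proj_resonance (θ : ℝ) (j l : ℤ) :
    proj θ (resonance j l) =
      l * (gasketDigits θ 0 - gasketDigits θ 1) - j * (gasketDigits θ 2 - gasketDigits θ 1) := by
  rw [resonance, map_sub, map_zsmul, map_zsmul, map_sub, map_sub, zsmul_eq_mul, zsmul_eq_mul]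
  rfl

lemma norm_resonance_sq (j l : ℤ) : ‖resonance j l‖ ^ 2 = 3 * (j ^ 2 - j * l + l ^ 2) := by
  have h3 : √3 ^ 2 = 3 := Real.sq_sqrt (by norm_num)
  simp only [resonance, vertex_zero, vertex_one, vertex_two, zsmul_eq_mul, Complex.sq_norm,
    Complex.normSq_apply, Complex.sub_re, Complex.sub_im, Complex.mul_re, Complex.mul_im,
    Complex.intCast_re, Complex.intCast_im, Complex.I_re, Complex.I_im]
  linear_combination (j + l : ℝ) ^ 2 / 4 * h3

lemma sqrt_three_le_norm_resonance {j l : ℤ} (h : (j, l) ≠ 0) : √3 ≤ ‖resonance j l‖ := by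
  have hpos : 1 ≤ j ^ 2 - j * l + l ^ 2 := by
    by_contra! hlt
    have hl : l = 0 := pow_eq_zero_iff two_ne_zero |>.1 (by nlinarith [sq_nonneg (2 * j - l)])
    subst hl
    have hj : j = 0 := pow_eq_zero_iff two_ne_zero |>.1 (by nlinarith)
    exact h (by rw [hj, Prod.mk_zero_zero])
  have hpos' : (1 : ℝ) ≤ j ^ 2 - j * l + l ^ 2 := by exact_mod_cast hpos
  refine Real.sqrt_le_iff.2 ⟨norm_nonneg _, ?_⟩
  rw [norm_resonance_sq]
  linarith

lemma three_halves_le_sq_add_sq (θ : ℝ) :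
    3 / 2 ≤ (gasketDigits θ 0 - gasketDigits θ 1) ^ 2 +
      (gasketDigits θ 2 - gasketDigits θ 1) ^ 2 := by
  have h3 : √3 ^ 2 = 3 := Real.sq_sqrt (by norm_num)
  simp only [gasketDigits, proj_eq_add, vertex_zero, vertex_one, vertex_two, Complex.I_re,
    Complex.I_im]
  nlinarith [Real.sin_sq_add_cos_sq θ, sq_nonneg (Real.sin θ)]

/-- The directions in `[0, π]` almost orthogonal to a nonzero resonance of height at most `M`. -/
def badDirections (M : ℕ) (η : ℝ) : Set ℝ :=
  ⋃ p ∈ (Finset.Icc (-M : ℤ) M ×ˢ Finset.Icc (-M : ℤ) M).erase 0,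
    nearNormal (resonance p.1 p.2) η

lemma measurableSet_badDirections (M : ℕ) (η : ℝ) : MeasurableSet (badDirections M η) :=
  Finset.measurableSet_biUnion _ fun _ _ => measurableSet_nearNormal _ _

lemma volume_badDirections_le (M : ℕ) {η : ℝ} (hη : 0 ≤ η) :
    volume (badDirections M η) ≤ ENNReal.ofReal (10 * (2 * M + 1) ^ 2 * η) := by
  set P := (Finset.Icc (-M : ℤ) M ×ˢ Finset.Icc (-M : ℤ) M).erase 0
  have hcard : #P ≤ (2 * M + 1) ^ 2 := by
    refine (Finset.card_erase_le).trans ?_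
    rw [Finset.card_product, Int.card_Icc, ← sq]
    gcongr
    omega
  have hterm (p : ℤ × ℤ) (hp : p ∈ P) :
      volume (nearNormal (resonance p.1 p.2) η) ≤ ENNReal.ofReal (10 * η) := by
    have hnorm := sqrt_three_le_norm_resonance (Finset.ne_of_mem_erase hp)
    have hsqrt : (1.7 : ℝ) ≤ √3 := Real.le_sqrt_of_sq_le (by norm_num)
    have hpos : 0 < ‖resonance p.1 p.2‖ := by linarith
    refine (volume_nearNormal_le (norm_pos_iff.1 hpos) η).trans (ENNReal.ofReal_le_ofReal ?_)
    rw [div_le_iff₀ hpos]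
    nlinarith [Real.pi_lt_d2]
  calc volume (badDirections M η) ≤ ∑ p ∈ P, volume (nearNormal (resonance p.1 p.2) η) :=
        measure_biUnion_finset_le _ _
    _ ≤ #P • ENNReal.ofReal (10 * η) := Finset.sum_le_card_nsmul _ _ _ hterm
    _ ≤ ENNReal.ofReal (10 * (2 * M + 1) ^ 2 * η) := by
        rw [← ENNReal.ofReal_nsmul, nsmul_eq_mul]
        refine ENNReal.ofReal_le_ofReal ?_
        have : (#P : ℝ) ≤ (2 * M + 1) ^ 2 := by exact_mod_cast hcard
        nlinarith

section SmallPhaseGap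

variable {p q r y η : ℝ} {M : ℕ} {j l : ℤ}

lemma abs_int_le_of_abs_mul_sub_le (hr : |r| ≤ 2) (hy : y ∈ Icc 1 (M : ℝ)) (hη : η ≤ 1 / 2)
    (hj : |r * y - 2 * Real.pi * j| ≤ Real.pi / 2 * η) : j ∈ Finset.Icc (-M : ℤ) M := by
  have hπ := Real.pi_gt_three
  have hM : 1 ≤ (M : ℝ) := hy.1.trans hy.2
  have hry : |r * y| ≤ 2 * M := by
    rw [abs_mul, abs_of_nonneg (by linarith [hy.1] : 0 ≤ y)]
    exact mul_le_mul hr hy.2 (by linarith [hy.1]) two_pos.le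
  have hle : 2 * Real.pi * |(j : ℝ)| ≤ 2 * M + Real.pi / 2 * η := calc
    2 * Real.pi * |(j : ℝ)| = |r * y - (r * y - 2 * Real.pi * j)| := by
      rw [sub_sub_cancel, abs_mul, abs_of_pos (by positivity : 0 < 2 * Real.pi)]
    _ ≤ 2 * M + Real.pi / 2 * η := (abs_sub _ _).trans (add_le_add hry hj)
  have hjM : |(j : ℝ)| ≤ M := by nlinarith
  rw [Finset.mem_Icc, ← abs_le]
  exact_mod_cast hjM

lemma sq_lt_of_abs_mul_le (hy : 1 ≤ y) (hη : η ≤ 1 / 2) (hr : |r * y| ≤ Real.pi / 2 * η) :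
    r ^ 2 < 3 / 4 := by
  have hπ := Real.pi_lt_d2
  have hr45 : |r| ≤ 4 / 5 := calc
    |r| ≤ |r * y| := by
      rw [abs_mul, abs_of_nonneg (by linarith : 0 ≤ y)]
      exact le_mul_of_one_le_right (abs_nonneg r) hy
    _ ≤ Real.pi / 2 * (1 / 2) := hr.trans (by gcongr)
    _ ≤ 4 / 5 := by linarith
  rw [← sq_abs]
  nlinarith [abs_nonneg r]

-- Eliminate `y` between `p y ≈ 2πj` and `q y ≈ 2πl`.
lemma abs_mul_sub_mul_le (hp : |p| ≤ 2) (hq : |q| ≤ 2)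
    (hj : |p * y - 2 * Real.pi * j| ≤ Real.pi / 2 * η)
    (hl : |q * y - 2 * Real.pi * l| ≤ Real.pi / 2 * η) : |l * p - j * q| ≤ η := by
  have hcross : 2 * Real.pi * |l * p - j * q| ≤ 2 * Real.pi * η := calc
    2 * Real.pi * |l * p - j * q| = |2 * Real.pi * (l * p - j * q)| := by
      rw [abs_mul, abs_of_pos Real.two_pi_pos]
    _ = |q * (p * y - 2 * Real.pi * j) - p * (q * y - 2 * Real.pi * l)| := by ring_nf
    _ ≤ |q| * |p * y - 2 * Real.pi * j| + |p| * |q * y - 2 * Real.pi * l| := by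
      simpa only [abs_mul] using abs_sub (q * _) (p * _)
    _ ≤ 2 * (Real.pi / 2 * η) + 2 * (Real.pi / 2 * η) := by gcongr
    _ = 2 * Real.pi * η := by ring
  exact le_of_mul_le_mul_left hcross Real.two_pi_pos

end SmallPhaseGap

lemma le_phaseGap_of_notMem_badDirections {M : ℕ} {η θ y : ℝ} (hη : η ≤ 1 / 2)
    (hθ : θ ∈ Icc 0 Real.pi) (hbad : θ ∉ badDirections M η) (hy : y ∈ Icc 1 (M : ℝ)) :
    η ≤ phaseGap (gasketDigits θ) y := by
  by_contra! hgap
  refine hbad ?_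
  set p := gasketDigits θ 0 - gasketDigits θ 1
  set q := gasketDigits θ 2 - gasketDigits θ 1
  have hdigits (i : Fin 3) : |gasketDigits θ i - gasketDigits θ 1| ≤ 2 :=
    (abs_sub _ _).trans (by linarith [abs_gasketDigits_le θ i, abs_gasketDigits_le θ 1])
  obtain ⟨j, hj⟩ := exists_abs_sub_two_pi_mul_int_le (p * y)
  obtain ⟨l, hl⟩ := exists_abs_sub_two_pi_mul_int_le (q * y)
  replace hj : |p * y - 2 * Real.pi * j| ≤ Real.pi / 2 * η :=
    hj.trans (by gcongr; exact (le_max_left _ _).trans hgap.le)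
  replace hl : |q * y - 2 * Real.pi * l| ≤ Real.pi / 2 * η :=
    hl.trans (by gcongr; exact (le_max_right _ _).trans hgap.le)
  have hne : (j, l) ≠ 0 := by
    intro h
    obtain ⟨rfl, rfl⟩ := Prod.mk_eq_zero.1 h
    rw [Int.cast_zero, mul_zero, sub_zero] at hj hl
    linarith [three_halves_le_sq_add_sq θ, sq_lt_of_abs_mul_le hy.1 hη hj,
      sq_lt_of_abs_mul_le hy.1 hη hl]
  refine mem_biUnion (x := (j, l)) (Finset.mem_erase.2 ⟨hne, Finset.mem_product.2
    ⟨abs_int_le_of_abs_mul_sub_le (hdigits 0) hy hη hj,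
      abs_int_le_of_abs_mul_sub_le (hdigits 2) hy hη hl⟩⟩) ⟨hθ, ?_⟩
  rw [proj_resonance]
  exact abs_mul_sub_mul_le (hdigits 0) (hdigits 2) hj hl

/-- The ratio of the generations at which the length of the cover is controlled, chosen so that
`scaleBase ^ m` dominates the generation in `coverLength_le_of_le_rieszProd` for
`Q = 65 * 648 ^ (2 * m)` windows. -/
def scaleBase : ℕ := 12 * 65 ^ 2 * 9 * 4 * 648 ^ 4

lemma le_scaleBase_pow (m : ℕ) :
    4 * 3 ^ (2 * m + 1) * (65 * 648 ^ (2 * m) * m) ^ 2 ≤ scaleBase ^ m := by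
  rcases m.eq_zero_or_pos with rfl | hm
  · norm_num
  have hsq : m ^ 2 ≤ 4 ^ m := by
    calc m ^ 2 ≤ (2 ^ m) ^ 2 := Nat.pow_le_pow_left Nat.lt_two_pow_self.le 2
      _ = 4 ^ m := by rw [pow_right_comm]; rfl
  calc 4 * 3 ^ (2 * m + 1) * (65 * 648 ^ (2 * m) * m) ^ 2
      = 12 * 65 ^ 2 * 9 ^ m * m ^ 2 * (648 ^ 4) ^ m := by
        rw [show (9 : ℕ) = 3 ^ 2 from rfl, ← pow_mul, ← pow_mul, mul_pow, mul_pow, ← pow_mul]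
        ring_nf
    _ ≤ (12 * 65 ^ 2) ^ m * 9 ^ m * 4 ^ m * (648 ^ 4) ^ m := by
        gcongr
        exact Nat.le_self_pow hm.ne' _
    _ = scaleBase ^ m := by simp only [scaleBase, mul_pow]

/-- The directions in `[0, π]` excluded at scale `m`. The width `27⁻ᵐ` outweighs the about `9ᵐ`
resonances of height at most `3ᵐ` by a factor `3ᵐ`. -/
def exceptionalDirections (m : ℕ) : Set ℝ := badDirections (3 ^ m) (2 * 27 ^ m)⁻¹

lemma measurableSet_exceptionalDirections (m : ℕ) : MeasurableSet (exceptionalDirections m) :=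
  measurableSet_badDirections _ _

lemma volume_exceptionalDirections_le (m : ℕ) :
    volume (exceptionalDirections m) ≤ ENNReal.ofReal (45 * ((3 : ℝ) ^ m)⁻¹) := by
  refine (volume_badDirections_le _ (by positivity)).trans (ENNReal.ofReal_le_ofReal ?_)
  have h1 : (1 : ℝ) ≤ 3 ^ m := one_le_pow₀ (by norm_num)
  push_cast
  calc 10 * (2 * 3 ^ m + 1) ^ 2 * (2 * 27 ^ m : ℝ)⁻¹
      ≤ 10 * (2 * 3 ^ m + 3 ^ m) ^ 2 * (2 * 27 ^ m : ℝ)⁻¹ := by gcongr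
    _ = 45 * ((3 : ℝ) ^ m)⁻¹ := by
        rw [show (27 : ℝ) = 3 ^ 3 by norm_num, ← pow_mul, mul_comm 3 m, pow_mul]
        field_simp
        norm_num

theorem coverLength_le_of_notMem_exceptionalDirections {m n : ℕ} {θ : ℝ}
    (hθ : θ ∈ Icc 0 Real.pi) (hm : θ ∉ exceptionalDirections m) (hn : scaleBase ^ m ≤ n) :
    coverLength (gasketDigits θ) n ≤ 2048 * sieveConst * ((3 : ℝ) ^ m)⁻¹ := by
  set η : ℝ := (2 * 27 ^ m)⁻¹
  have hη : η ≤ 1 / 2 := by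
    rw [one_div]
    refine inv_anti₀ two_pos ?_
    exact le_mul_of_one_le_right two_pos.le (one_le_pow₀ (by norm_num))
  have hlow (ξ : ℝ) (hξ : ξ ∈ Icc 1 (((3 : ℕ) : ℝ) ^ m)) :
      (η / (2 * 24 ^ m)) ^ 2 ≤ rieszProd (gasketDigits θ) m ξ := by
    refine le_trans ?_ (sq_phaseGap_le_rieszProd _ m ξ)
    gcongr
    exact le_phaseGap_of_notMem_badDirections hη hθ hm (by exact_mod_cast hξ)
  have hQ : 4 < ((65 * 648 ^ (2 * m) : ℕ) : ℝ) * (η / (2 * 24 ^ m)) ^ 2 := by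
    have : ((65 * 648 ^ (2 * m) : ℕ) : ℝ) * (η / (2 * 24 ^ m)) ^ 2 = 65 / 16 := by
      push_cast
      rw [show (648 : ℝ) = 27 * 24 by norm_num, mul_pow]
      simp only [η]
      field_simp
      ring
    rw [this]
    norm_num
  refine (coverLength_antitone (abs_gasketDigits_le θ)
    ((le_scaleBase_pow m).trans hn)).trans ?_
  exact_mod_cast coverLength_le_of_le_rieszProd le_rfl (abs_gasketDigits_le θ) (sq_nonneg _)
    hlow hQ

/-! ### Favard length -/

lemma fav_le {E : Set ℂ} {B : Set ℝ} {D M β : ℝ} (hD : 0 ≤ D) (hβ : 0 ≤ β) (hB : MeasurableSet B)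
    (hBβ : volume B ≤ ENNReal.ofReal β)
    (hM : ∀ θ ∈ Icc 0 Real.pi, volume.real (projDir θ E) ≤ M)
    (hED : ∀ θ ∈ Icc 0 Real.pi, θ ∉ B → volume.real (projDir θ E) ≤ D) :
    fav E ≤ D + M * β / Real.pi := by
  have hπ := Real.pi_pos
  have hM0 : 0 ≤ M := measureReal_nonneg.trans (hM 0 (left_mem_Icc.2 hπ.le))
  have hind : Integrable (B.indicator fun _ => M) :=
    (integrable_indicator_iff hB).2 (integrableOn_const (hBβ.trans_lt ENNReal.ofReal_lt_top).ne)
  have hpointwise (θ : ℝ) (hθ : θ ∈ Ioc 0 Real.pi) :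
      volume.real (projDir θ E) ≤ D + B.indicator (fun _ => M) θ := by
    by_cases hθB : θ ∈ B
    · rw [indicator_of_mem hθB]
      exact (hM θ (Ioc_subset_Icc_self hθ)).trans (le_add_of_nonneg_left hD)
    · rw [indicator_of_notMem hθB, add_zero]
      exact hED θ (Ioc_subset_Icc_self hθ) hθB
  have hexcess : ∫ θ in Ioc 0 Real.pi, B.indicator (fun _ => M) θ ≤ M * β := calc
    _ ≤ ∫ θ, B.indicator (fun _ => M) θ :=
      setIntegral_le_integral hind (.of_forall (indicator_nonneg fun _ _ => hM0))
    _ = M * volume.real B := by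
      rw [integral_indicator hB, setIntegral_const, smul_eq_mul, mul_comm]
    _ ≤ M * β := by
      gcongr
      exact ENNReal.toReal_le_of_le_ofReal hβ hBβ
  have htotal : ∫ θ in Ioc 0 Real.pi, volume.real (projDir θ E) ≤ Real.pi * D + M * β := calc
    _ ≤ ∫ θ in Ioc 0 Real.pi, (D + B.indicator (fun _ => M) θ) :=
      integral_mono_of_nonneg (.of_forall fun _ => measureReal_nonneg)
        ((integrable_const D).add hind.integrableOn)
        (ae_restrict_of_forall_mem measurableSet_Ioc hpointwise)
    _ = Real.pi * D + ∫ θ in Ioc 0 Real.pi, B.indicator (fun _ => M) θ := by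
      rw [integral_add (integrable_const D) hind.integrableOn, setIntegral_const,
        Real.volume_real_Ioc_of_le hπ.le, sub_zero, smul_eq_mul]
    _ ≤ Real.pi * D + M * β := by gcongr
  rw [fav, intervalIntegral.integral_of_le hπ.le]
  calc 1 / Real.pi * ∫ θ in Ioc 0 Real.pi, volume.real (projDir θ E)
      ≤ 1 / Real.pi * (Real.pi * D + M * β) := by gcongr
    _ = D + M * β / Real.pi := by field_simp

lemma proj_gasketCenter (θ : ℝ) {n : ℕ} {α : Fin n → ℤ} {d : Fin n → Fin 3}
    (hd : ∀ k, α k = (d k : ℕ) - 1) :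
    proj θ (gasketCenter n α) = wordPoint (gasketDigits θ) (List.ofFn d) := by
  rw [wordPoint_ofFn, gasketCenter, map_sum]
  refine Finset.sum_congr rfl fun k _ => ?_
  have hterm : (3 : ℂ) ^ (-(k.1 + 1 : ℤ)) * Complex.exp (Complex.I * (Real.pi : ℂ) *
      ((1 / 2 : ℂ) + (2 / 3 : ℂ) * (α k : ℂ))) = ((3 : ℝ) ^ (k.1 + 1))⁻¹ • vertex (d k) := by
    rw [hd, vertex, Complex.real_smul, zpow_neg]
    push_cast
    norm_cast
  rw [hterm, map_smul, smul_eq_mul, ← div_eq_inv_mul, gasketDigits, Nat.cast_ofNat]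

lemma projDir_gasket_subset_cover (θ : ℝ) (n : ℕ) :
    projDir θ (gasket n) ⊆ cover (gasketDigits θ) n := by
  rintro _ ⟨z, hz, rfl⟩
  simp only [gasket, mem_iUnion, mem_ofPred_eq, exists_prop] at hz
  obtain ⟨α, hα, hz⟩ := hz
  have hdigit (k : Fin n) : ∃ i : Fin 3, α k = (i : ℕ) - 1 := by
    rcases hα k with h | h | h
    exacts [⟨0, by simp [h]⟩, ⟨1, by simp [h]⟩, ⟨2, by simp [h]⟩]
  choose d hd using hdigit
  refine mem_cover.2 ⟨List.ofFn d, by simp, ?_⟩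
  rw [mem_ball, dist_eq_norm, zpow_neg, zpow_natCast] at hz
  rw [tile, mem_closedBall, ← proj_gasketCenter θ hd, List.length_ofFn, Nat.cast_ofNat]
  calc dist (proj θ z) (proj θ (gasketCenter n α))
      = |proj θ (z - gasketCenter n α)| := by rw [Real.dist_eq, map_sub]
    _ ≤ ((3 : ℝ) ^ n)⁻¹ := (abs_proj_le θ _).trans hz.le

lemma volume_real_projDir_gasket_le (θ : ℝ) (n : ℕ) :
    volume.real (projDir θ (gasket n)) ≤ coverLength (gasketDigits θ) n :=
  measureReal_mono (projDir_gasket_subset_cover θ n) (isCompact_cover _ n).measure_lt_top.ne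

theorem fav_gasket_le {m n : ℕ} (hn : scaleBase ^ m ≤ n) :
    fav (gasket n) ≤ (2048 * sieveConst + 30) * ((3 : ℝ) ^ m)⁻¹ := by
  have hS := sieveConst_pos
  calc fav (gasket n)
      ≤ 2048 * sieveConst * ((3 : ℝ) ^ m)⁻¹ + 2 * (45 * ((3 : ℝ) ^ m)⁻¹) / Real.pi :=
        fav_le (by positivity) (by positivity) (measurableSet_exceptionalDirections m)
          (volume_exceptionalDirections_le m)
          (fun θ _ => (volume_real_projDir_gasket_le θ n).trans (coverLength_le_two _ n))
          fun θ hθ hm => (volume_real_projDir_gasket_le θ n).trans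
            (coverLength_le_of_notMem_exceptionalDirections hθ hm hn)
    _ ≤ 2048 * sieveConst * ((3 : ℝ) ^ m)⁻¹ + 2 * (45 * ((3 : ℝ) ^ m)⁻¹) / 3 := by
        gcongr
        exact Real.pi_gt_three.le
    _ = (2048 * sieveConst + 30) * ((3 : ℝ) ^ m)⁻¹ := by ring

lemma le_rpow_neg_of_geometric {f : ℕ → ℝ} {P : ℕ} {r C : ℝ} (hP : 1 < P) (hr : 1 ≤ r)
    (hC : 0 ≤ C) (h : ∀ m n, P ^ m ≤ n → f n ≤ C * (r ^ m)⁻¹) {n : ℕ} (hn : 1 ≤ n) :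
    f n ≤ C * r * (n : ℝ) ^ (-Real.logb P r) := by
  have hP' : (1 : ℝ) < P := by exact_mod_cast hP
  have hn' : (0 : ℝ) < n := by exact_mod_cast hn
  have hr0 : 0 < r := zero_lt_one.trans_le hr
  set m := Nat.log P n
  have hpow : (n : ℝ) ^ Real.logb P r ≤ r ^ (m + 1) := calc
    (n : ℝ) ^ Real.logb P r ≤ ((P : ℝ) ^ (m + 1)) ^ Real.logb P r := by
      refine Real.rpow_le_rpow hn'.le ?_ (Real.logb_nonneg hP' hr)
      exact_mod_cast (Nat.lt_pow_succ_log_self hP n).le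
    _ = r ^ (m + 1) := by
      rw [← Real.rpow_pow_comm (by positivity), Real.rpow_logb (by positivity) hP'.ne' hr0]
  calc f n ≤ C * (r ^ m)⁻¹ := h m n (Nat.pow_log_le_self P (by omega))
    _ = C * r * (r ^ (m + 1))⁻¹ := by
      rw [pow_succ]
      field_simp
    _ ≤ C * r * (n : ℝ) ^ (-Real.logb P r) := by
      rw [Real.rpow_neg hn'.le]
      gcongr

end

end FavardLength

/-- There exist `p > 0` and `C > 0` such that `Fav(G_n) ≤ C·n^{-p}` for all `n ≥ 1`. -/
theorem gasket_favard_power_law :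
    ∃ p > (0:ℝ), ∃ C > (0:ℝ), ∀ n : ℕ, 1 ≤ n →
      fav (gasket n) ≤ C * (n : ℝ) ^ (-p) := by
  have hS := FavardLength.sieveConst_pos
  have hP : 1 < FavardLength.scaleBase := by norm_num [FavardLength.scaleBase]
  refine ⟨Real.logb FavardLength.scaleBase 3, Real.logb_pos (by exact_mod_cast hP) (by norm_num),
    (2048 * FavardLength.sieveConst + 30) * 3, by positivity, fun n hn => ?_⟩
  exact FavardLength.le_rpow_neg_of_geometric (f := fun n => fav (gasket n)) hP (by norm_num)
    (by positivity) (fun _ _ => FavardLength.fav_gasket_le) hn
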